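/- Let 𝒟 = {DF(w) : w ∈ Max} with the Hausdorff metric. There is a dense G_δ subset 𝒢 of 𝒟 such that every Λ ∈ 𝒢 has the following properties: the set of extreme points of Λ has a unique accumulation point v; v is an extreme point of Λ; v is totally irrational, i.e. there is no nonzero n ∈ ℤ³ with n·v = 0; and Λ is smooth at v, i.e. there is exactly one line L in the plane {x ∈ ℝ³ : x₀+x₁+x₂ = 1} with v ∈ L such that Λ is contained in one of the two closed half-planes of that plane bounded by L. -/

import Mathlib

open Filter Topology MeasureTheory

/-- The sequence space `Σ⁺ = {0,1,2}^ℕ` (with the product topology). -/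
abbrev Seq3 := ℕ → Fin 3

/-- The shift map `σ`. -/
def shift (s : Seq3) : Seq3 := fun n => s (n + 1)

/-- The observable `κ(s) = e_{s₀}`. -/
noncomputable def kappa (s : Seq3) : Fin 3 → ℝ := fun i => if i = s 0 then 1 else 0

/-- The cocycle `κ_σ(s,r) = Σ_{i<r} κ(σⁱ s)`. -/
noncomputable def birk (s : Seq3) (r : ℕ) : Fin 3 → ℝ :=
  ∑ i ∈ Finset.range r, kappa (shift^[i] s)

/-- The Birkhoff digit frequency of `s` exists and equals `v`. -/
def hasFreq (s : Seq3) (v : Fin 3 → ℝ) : Prop :=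
  Tendsto (fun r : ℕ => (r : ℝ)⁻¹ • birk s r) atTop (nhds v)

/-- The lexicographic order on `Σ⁺`. -/
def lexLe (s t : Seq3) : Prop :=
  s = t ∨ ∃ n, (∀ i, i < n → s i = t i) ∧ s n < t n

/-- The set `Max` of maximal sequences. -/
def MaxSet : Set Seq3 := {w | w 0 = 2 ∧ ∀ r : ℕ, lexLe (shift^[r] w) w}

/-- The symbolic β-shift `B(w)`. -/
def BetaShift (w : Seq3) : Set Seq3 := {s | ∀ r : ℕ, lexLe (shift^[r] s) w}

/-- The digit frequency set `DF(w)`. -/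
def DF (w : Seq3) : Set (Fin 3 → ℝ) := {v | ∃ s ∈ BetaShift w, hasFreq s v}

/-- The Misiurewicz–Ziemian digit frequency set `DF_MZ(X)` of a subset `X ⊆ Σ⁺`. -/
def DFMZ (X : Set Seq3) : Set (Fin 3 → ℝ) :=
  {v | ∃ (s : ℕ → Seq3) (r : ℕ → ℕ), (∀ i, s i ∈ X) ∧ Tendsto r atTop atTop ∧
    Tendsto (fun i => (r i : ℝ)⁻¹ • birk (s i) (r i)) atTop (nhds v)}

/-- The standard 2-simplex `Δ ⊆ ℝ³`. -/
def Delta : Set (Fin 3 → ℝ) := {α | (∀ i, 0 ≤ α i) ∧ α 0 + α 1 + α 2 = 1}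

/-- `Δ' = {α ∈ Δ : α₂ > 0}`. -/
def Delta' : Set (Fin 3 → ℝ) := {α | α ∈ Delta ∧ 0 < α 2}

/-- `I` is the infimax sequence of `α`: the infimum, in the lexicographic order, of the
(nonempty) set of maximal sequences with digit frequency `α`; it belongs to `Max`. -/
def IsInfimax (α : Fin 3 → ℝ) (I : Seq3) : Prop :=
  {w | w ∈ MaxSet ∧ hasFreq w α}.Nonempty ∧ I ∈ MaxSet ∧
    (∀ w, w ∈ MaxSet ∧ hasFreq w α → lexLe I w) ∧
    (∀ b : Seq3, (∀ w, w ∈ MaxSet ∧ hasFreq w α → lexLe b w) → lexLe b I)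

/-- The closure of the forward `σ`-orbit of `s` (e.g. `C_α` is `orbitClosure I(α)`). -/
def orbitClosure (s : Seq3) : Set Seq3 := closure {t | ∃ r : ℕ, shift^[r] s = t}

/-- A vector in `ℝ³` is rational if all its coordinates are. -/
def IsRat (v : Fin 3 → ℝ) : Prop := ∀ i, ∃ q : ℚ, v i = (q : ℝ)

/-- A minimal set of a continuous map: a nonempty compact invariant set in which every
point has dense forward orbit. -/
def IsMinimalSet {X : Type*} [TopologicalSpace X] (f : X → X) (C : Set X) : Prop :=
  C.Nonempty ∧ IsCompact C ∧ Set.MapsTo f C C ∧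
    ∀ x ∈ C, C ⊆ closure {y | ∃ n : ℕ, f^[n] x = y}

/-- `L` is a supporting line of `S` at `v` within the plane `{x : x₀+x₁+x₂ = 1}`: `L` is a
line through `v` with direction parallel to the plane, and there is a linear functional,
constant on `L` but not constant on the plane, with respect to which `S` lies in the
closed half-plane bounded by `L`. -/
def IsSuppLine (S : Set (Fin 3 → ℝ)) (v : Fin 3 → ℝ) (L : Set (Fin 3 → ℝ)) : Prop :=
  ∃ d : Fin 3 → ℝ, d ≠ 0 ∧ d 0 + d 1 + d 2 = 0 ∧
    L = {x | ∃ t : ℝ, x = v + t • d} ∧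
    ∃ f : (Fin 3 → ℝ) →ₗ[ℝ] ℝ, f d = 0 ∧
      (∃ x : Fin 3 → ℝ, x 0 + x 1 + x 2 = 1 ∧ f x ≠ f v) ∧
      ∀ x ∈ S, f x ≤ f v

/-- `v` is totally irrational: no nonzero integer vector is orthogonal to it. -/
def TotallyIrrational (v : Fin 3 → ℝ) : Prop :=
  ¬ ∃ m : Fin 3 → ℤ, m ≠ 0 ∧ (∑ i, (m i : ℝ) * v i) = 0


/-! ## Words -/

def ev (a : Fin 3) : Fin 3 → ℝ := fun i => if i = a then 1 else 0

def cnt : List (Fin 3) → Fin 3 → ℝ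
  | [] => 0
  | a :: l => ev a + cnt l

def sg : (Fin 3 → ℝ) →ₗ[ℝ] ℝ := 
  (LinearMap.proj 0 : (Fin 3 → ℝ) →ₗ[ℝ] ℝ) + (LinearMap.proj 1 : (Fin 3 → ℝ) →ₗ[ℝ] ℝ) +
    (LinearMap.proj 2 : (Fin 3 → ℝ) →ₗ[ℝ] ℝ)

theorem sg_apply (x : Fin 3 → ℝ) : sg x = x 0 + x 1 + x 2 := rfl

theorem sg_ev (a : Fin 3) : sg (ev a) = 1 := by
  fin_cases a <;> simp [sg_apply, ev]

theorem cnt_append (l l' : List (Fin 3)) : cnt (l ++ l') = cnt l + cnt l' := by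
  induction l with
  | nil => simp [cnt]
  | cons a l ih => simp [cnt, ih, add_assoc]

theorem sg_cnt (l : List (Fin 3)) : sg (cnt l) = l.length := by
  induction l with
  | nil => simp [cnt]
  | cons a l ih => simp [cnt, ih, sg_ev, add_comm]

theorem cnt_nonneg (l : List (Fin 3)) (i : Fin 3) : 0 ≤ cnt l i := by
  induction l with
  | nil => simp [cnt]
  | cons a l ih =>
    have : 0 ≤ ev a i := by unfold ev; split_ifs <;> norm_num
    simp only [cnt, Pi.add_apply]; linarith

theorem cnt_le (l : List (Fin 3)) (i : Fin 3) : cnt l i ≤ l.length := by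
  induction l with
  | nil => simp [cnt]
  | cons a l ih =>
    have : ev a i ≤ 1 := by unfold ev; split_ifs <;> norm_num
    simp only [cnt, Pi.add_apply, List.length_cons]; push_cast; linarith

theorem norm_cnt_le (l : List (Fin 3)) : ‖cnt l‖ ≤ l.length := by
  refine (pi_norm_le_iff_of_nonneg (Nat.cast_nonneg _)).2 fun i => ?_
  rw [Real.norm_eq_abs, abs_of_nonneg (cnt_nonneg l i)]
  exact cnt_le l i

def rep (k : ℕ) (l : List (Fin 3)) : List (Fin 3) := (List.replicate k l).flatten

theorem rep_succ (k : ℕ) (l : List (Fin 3)) : rep (k+1) l = l ++ rep k l := by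
  simp [rep, List.replicate_succ]

theorem cnt_rep (k : ℕ) (l : List (Fin 3)) : cnt (rep k l) = (k : ℝ) • cnt l := by
  induction k with
  | zero => simp [rep, cnt]
  | succ k ih => rw [rep_succ, cnt_append, ih]; push_cast; rw [add_smul, one_smul, add_comm]

theorem length_rep (k : ℕ) (l : List (Fin 3)) : (rep k l).length = k * l.length := by
  simp [rep]

def ltp : List (Fin 3) → Seq3 → Prop
  | [], _ => False
  | a :: l, w => a < w 0 ∨ (a = w 0 ∧ ltp l (shift w))

def lep : List (Fin 3) → Seq3 → Prop
  | [], _ => True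
  | a :: l, w => a < w 0 ∨ (a = w 0 ∧ lep l (shift w))

def good (w : Seq3) : List (Fin 3) → Prop
  | [] => True
  | a :: l => ltp (a :: l) w ∧ good w l

def wgood (w : Seq3) : List (Fin 3) → Prop
  | [] => True
  | a :: l => lep (a :: l) w ∧ wgood w l

theorem ltp_append {l : List (Fin 3)} (l' : List (Fin 3)) {w : Seq3} (h : ltp l w) :
    ltp (l ++ l') w := by
  induction l generalizing w with
  | nil => exact h.elim
  | cons a l ih =>
    rcases h with h | ⟨h, h'⟩
    · exact Or.inl h
    · exact Or.inr ⟨h, ih h'⟩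

theorem ltp.lep {l : List (Fin 3)} {w : Seq3} (h : ltp l w) : lep l w := by
  induction l generalizing w with
  | nil => trivial
  | cons a l ih =>
    rcases h with h | ⟨h, h'⟩
    · exact Or.inl h
    · exact Or.inr ⟨h, ih h'⟩

theorem lep_of_append {l l' : List (Fin 3)} {w : Seq3} (h : lep (l ++ l') w) : lep l w := by
  induction l generalizing w with
  | nil => trivial
  | cons a l ih =>
    rcases h with h | ⟨h, h'⟩
    · exact Or.inl h
    · exact Or.inr ⟨h, ih h'⟩

theorem good_append {l l' : List (Fin 3)} {w : Seq3} (h : good w l) (h' : good w l') :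
    good w (l ++ l') := by
  induction l with
  | nil => exact h'
  | cons a l ih => exact ⟨ltp_append l' h.1, ih h.2⟩

theorem good_rep {l : List (Fin 3)} {w : Seq3} (h : good w l) (k : ℕ) : good w (rep k l) := by
  induction k with
  | zero => trivial
  | succ k ih => rw [rep_succ]; exact good_append h ih

theorem good_right {l l' : List (Fin 3)} {w : Seq3} (h : good w (l ++ l')) : good w l' := by
  induction l with
  | nil => exact h
  | cons a l ih => exact ih h.2

theorem good.ltp {l : List (Fin 3)} {w : Seq3} (h : good w l) (hl : l ≠ []) : ltp l w := by
  cases l with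
  | nil => exact (hl rfl).elim
  | cons a l => exact h.1

theorem good.wgood {l : List (Fin 3)} {w : Seq3} (h : good w l) : wgood w l := by
  induction l with
  | nil => trivial
  | cons a l ih => exact ⟨h.1.lep, ih h.2⟩

theorem wgood_left {l l' : List (Fin 3)} {w : Seq3} (h : wgood w (l ++ l')) : wgood w l := by
  induction l with
  | nil => trivial
  | cons a l ih => exact ⟨lep_of_append h.1, ih h.2⟩

theorem wgood_right {l l' : List (Fin 3)} {w : Seq3} (h : wgood w (l ++ l')) : wgood w l' := by
  induction l with
  | nil => exact h
  | cons a l ih => exact ih h.2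

theorem wgood.lep {l : List (Fin 3)} {w : Seq3} (h : wgood w l) : lep l w := by
  cases l with
  | nil => trivial
  | cons a l => exact h.1

/-- prefix of a sequence -/
def tk : ℕ → Seq3 → List (Fin 3)
  | 0, _ => []
  | k+1, s => s 0 :: tk k (shift s)

theorem tk_length (k : ℕ) (s : Seq3) : (tk k s).length = k := by
  induction k generalizing s with
  | zero => rfl
  | succ k ih => simp [tk, ih]

theorem shift_iter (r : ℕ) (s : Seq3) (i : ℕ) : (shift^[r] s) i = s (r + i) := by
  induction r generalizing s with
  | zero => simp
  | succ r ih => rw [Function.iterate_succ_apply, ih]; simp only [shift]; congr 1; omega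

theorem tk_add (a b : ℕ) (s : Seq3) : tk (a+b) s = tk a s ++ tk b (shift^[a] s) := by
  induction a generalizing s with
  | zero => simp [tk]
  | succ a ih =>
    rw [Nat.add_right_comm]
    simp only [tk, List.cons_append, Function.iterate_succ_apply, ih]

theorem birk_succ' (s : Seq3) (r : ℕ) : birk s (r+1) = kappa s + birk (shift s) r := by
  unfold birk
  rw [Finset.sum_range_succ', add_comm]
  rfl

theorem kappa_eq (s : Seq3) : kappa s = ev (s 0) := rfl

theorem birk_eq (s : Seq3) (r : ℕ) : birk s r = cnt (tk r s) := by
  induction r generalizing s with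
  | zero => simp [birk, tk, cnt]
  | succ r ih => rw [birk_succ', ih, kappa_eq]; rfl

theorem lexLe_iff (s t : Seq3) : lexLe s t ↔ ∀ n, (∀ i < n, s i = t i) → s n ≤ t n := by
  constructor
  · rintro (rfl | ⟨n, h1, h2⟩) m hm
    · exact le_rfl
    · rcases lt_trichotomy m n with h | h | h
      · exact (h1 m h).le
      · subst h; exact h2.le
      · exact absurd (hm n h) h2.ne
  · intro h
    by_cases he : s = t
    · exact Or.inl he
    · right
      have hex : ∃ n, s n ≠ t n := by
        by_contra hc; push Not at hc; exact he (funext hc)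
      classical
      refine ⟨Nat.find hex, fun i hi => not_not.1 (Nat.find_min hex hi), ?_⟩
      exact lt_of_le_of_ne (h _ fun i hi => not_not.1 (Nat.find_min hex hi)) (Nat.find_spec hex)

theorem lep_tk_iff (k : ℕ) (s t : Seq3) :
    lep (tk k s) t ↔ ∀ n < k, (∀ i < n, s i = t i) → s n ≤ t n := by
  induction k generalizing s t with
  | zero => simp [tk, lep]
  | succ k ih =>
    simp only [tk, lep, ih]
    constructor
    · rintro (h | ⟨h, h'⟩) n hn hi
      · rcases n with _ | n
        · exact h.le
        · exact absurd (hi 0 (by omega)) h.ne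
      · rcases n with _ | n
        · exact h.le
        · exact h' n (by omega) fun i hi' => hi (i+1) (by omega)
    · intro h
      rcases (h 0 (by omega) (by simp)).lt_or_eq with h0 | h0
      · exact Or.inl h0
      · refine Or.inr ⟨h0, fun n hn hi => h (n+1) (by omega) fun i hi' => ?_⟩
        rcases i with _ | i
        · exact h0
        · exact hi i (by omega)

theorem lexLe_iff_lep (s t : Seq3) : lexLe s t ↔ ∀ k, lep (tk k s) t := by
  simp only [lexLe_iff, lep_tk_iff]
  exact ⟨fun h k n _ => h n, fun h n => h (n+1) n (by omega)⟩

theorem lexLe_refl (s : Seq3) : lexLe s s := Or.inl rfl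

theorem lexLe_trans {s t u : Seq3} (h : lexLe s t) (h' : lexLe t u) : lexLe s u := by
  rcases h with rfl | ⟨n, h1, h2⟩
  · exact h'
  rcases h' with rfl | ⟨m, h3, h4⟩
  · exact Or.inr ⟨n, h1, h2⟩
  right
  rcases lt_trichotomy m n with h | h | h
  · exact ⟨m, fun i hi => (h1 i (hi.trans h)).trans (h3 i hi), (h1 m h) ▸ h4⟩
  · subst h; exact ⟨m, fun i hi => (h1 i hi).trans (h3 i hi), h2.trans h4⟩
  · exact ⟨n, fun i hi => (h1 i hi).trans (h3 i (hi.trans h)), (h3 n h) ▸ h2⟩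

theorem lexLe_total (s t : Seq3) : lexLe s t ∨ lexLe t s := by
  by_cases he : s = t
  · exact Or.inl (Or.inl he)
  have hex : ∃ n, s n ≠ t n := by
    by_contra hc; push Not at hc; exact he (funext hc)
  classical
  have hm : ∀ i < Nat.find hex, s i = t i := fun i hi => not_not.1 (Nat.find_min hex hi)
  rcases lt_or_gt_of_ne (Nat.find_spec hex) with h | h
  · exact Or.inl (Or.inr ⟨_, hm, h⟩)
  · exact Or.inr (Or.inr ⟨_, fun i hi => (hm i hi).symm, h⟩)

theorem betaShift_mono {w w' : Seq3} (h : lexLe w w') : BetaShift w ⊆ BetaShift w' :=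
  fun _ hs r => lexLe_trans (hs r) h

theorem DF_mono {w w' : Seq3} (h : lexLe w w') : DF w ⊆ DF w' :=
  fun _ ⟨s, hs, hv⟩ => ⟨s, betaShift_mono h hs, hv⟩

theorem wgood_tk {w s : Seq3} (hs : s ∈ BetaShift w) (k r : ℕ) : wgood w (tk k (shift^[r] s)) := by
  induction k generalizing r with
  | zero => trivial
  | succ k ih =>
    refine ⟨(lexLe_iff_lep _ _).1 (hs r) (k+1), ?_⟩
    have := ih (r+1)
    rwa [Function.iterate_succ_apply'] at this

theorem mem_betaShift_of_wgood {w s : Seq3} (h : ∀ k, wgood w (tk k s)) : s ∈ BetaShift w := by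
  intro r
  rw [lexLe_iff_lep]
  intro k
  have := h (r + k)
  rw [tk_add] at this
  exact (wgood_right this).lep

/-! decrement -/
def dec : List (Fin 3) → List (Fin 3)
  | [] => []
  | a :: l => if ∀ x ∈ l, x = 0 then 0 :: l else a :: dec l

theorem dec_length (l : List (Fin 3)) : (dec l).length = l.length := by
  induction l with
  | nil => rfl
  | cons a l ih => unfold dec; split_ifs <;> simp [ih]

theorem norm_dec (l : List (Fin 3)) : ‖cnt (dec l) - cnt l‖ ≤ 1 := by
  induction l with
  | nil => simp [dec]
  | cons a l ih =>
    unfold dec; split_ifs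
    · simp only [cnt, add_sub_add_right_eq_sub]
      refine (pi_norm_le_iff_of_nonneg zero_le_one).2 fun i => ?_
      simp only [ev, Pi.sub_apply]
      split_ifs <;> norm_num
    · simpa [cnt] using ih

theorem ltp_dec {l : List (Fin 3)} {w : Seq3} (h : lep l w) (hne : ∃ x ∈ l, x ≠ 0) :
    ltp (dec l) w := by
  induction l generalizing w with
  | nil => simp at hne
  | cons a l ih =>
    unfold dec
    split_ifs with hz
    · have ha : a ≠ 0 := by
        rintro rfl
        obtain ⟨x, hx, hx0⟩ := hne
        rcases List.mem_cons.1 hx with h | h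
        · exact hx0 h
        · exact hx0 (hz x h)
      left
      have : 0 < a := Fin.pos_iff_ne_zero.2 ha
      rcases h with h | h
      · exact this.trans h
      · exact h.1 ▸ this
    · rcases h with h | h
      · exact Or.inl h
      · push Not at hz
        exact Or.inr ⟨h.1, ih h.2 hz⟩

theorem good_zeros {w : Seq3} (hw : w 0 = 2) {l : List (Fin 3)} (h : ∀ x ∈ l, x = 0) :
    good w l := by
  induction l with
  | nil => trivial
  | cons a l ih =>
    refine ⟨Or.inl ?_, ih fun x hx => h x (by simp [hx])⟩
    rw [hw, h a (by simp)]; decide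

theorem good_dec {w : Seq3} (hw : w 0 = 2) {l : List (Fin 3)} (h : wgood w l) :
    good w (dec l) := by
  induction l with
  | nil => trivial
  | cons a l ih =>
    by_cases hz : ∀ x ∈ l, x = 0
    · have : dec (a :: l) = 0 :: l := by simp only [dec, if_pos hz]
      rw [this]
      apply good_zeros hw
      intro x hx
      rcases List.mem_cons.1 hx with h | h
      · exact h
      · exact hz x h
    · have hd : dec (a :: l) = a :: dec l := by simp only [dec, if_neg hz]
      have := ltp_dec h.1 (by push Not at hz; obtain ⟨x, hx, h⟩ := hz; exact ⟨x, by simp [hx], h⟩)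
      rw [hd] at this ⊢
      exact ⟨this, ih h.2⟩

theorem lep_congr {l : List (Fin 3)} {w w' : Seq3} (h : ∀ i < l.length, w i = w' i)
    (hl : lep l w) : lep l w' := by
  induction l generalizing w w' with
  | nil => trivial
  | cons a l ih =>
    have h0 := h 0 (by simp)
    rcases hl with h1 | ⟨h1, h2⟩
    · exact Or.inl (h0 ▸ h1)
    · exact Or.inr ⟨h0 ▸ h1, ih (fun i hi => h (i+1) (by simp; omega)) h2⟩

theorem wgood_congr {l : List (Fin 3)} {w w' : Seq3} (h : ∀ i < l.length, w i = w' i)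
    (hl : wgood w l) : wgood w' l := by
  induction l with
  | nil => trivial
  | cons a l ih =>
    exact ⟨lep_congr h hl.1, ih (fun i hi => h i (by simp; omega)) hl.2⟩


noncomputable def fr (l : List (Fin 3)) : Fin 3 → ℝ := (l.length : ℝ)⁻¹ • cnt l

def Fr (w : Seq3) : Set (Fin 3 → ℝ) := {x | ∃ l, good w l ∧ l ≠ [] ∧ x = fr l}

theorem length_pos' {l : List (Fin 3)} (h : l ≠ []) : (0:ℝ) < l.length := by
  have := List.length_pos_iff.2 h
  exact_mod_cast this

theorem sg_fr {l : List (Fin 3)} (h : l ≠ []) : sg (fr l) = 1 := by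
  have := length_pos' h
  simp only [fr, map_smul, sg_cnt, smul_eq_mul]
  field_simp

theorem DF_sub_closure {w : Seq3} (hw : w 0 = 2) : DF w ⊆ closure (Fr w) := by
  rintro v ⟨s, hs, hv⟩
  have h1 : Tendsto (fun r : ℕ => (r : ℝ)⁻¹ • (cnt (dec (tk r s)) - cnt (tk r s))) atTop (𝓝 0) := by
    refine squeeze_zero_norm (a := fun r : ℕ => (r:ℝ)⁻¹) (fun r => ?_) tendsto_inv_atTop_nhds_zero_nat
    rw [norm_smul, Real.norm_of_nonneg (by positivity)]
    exact mul_le_of_le_one_right (by positivity) (norm_dec _)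
  have h2 : Tendsto (fun r : ℕ => fr (dec (tk r s))) atTop (𝓝 v) := by
    have := h1.add hv
    rw [zero_add] at this
    refine this.congr fun r => ?_
    simp only [fr, dec_length, tk_length, birk_eq, smul_sub]
    abel
  refine mem_closure_of_tendsto h2 ?_
  filter_upwards [eventually_ge_atTop 1] with r hr
  refine ⟨_, good_dec hw (by simpa using wgood_tk hs r 0), ?_, rfl⟩
  rw [← List.length_pos_iff, dec_length, tk_length]; omega

theorem exists_slow (ℓ : ℕ → ℕ) :
    ∃ i : ℕ → ℕ, Tendsto i atTop atTop ∧ ∀ j, i j * ℓ (i j) ≤ j := by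
  refine ⟨fun j => Nat.findGreatest (fun i => i * ℓ i ≤ j) j, ?_, fun j => ?_⟩
  · refine tendsto_atTop.2 fun m => ?_
    filter_upwards [eventually_ge_atTop (max m (m * ℓ m))] with j hj
    exact Nat.le_findGreatest (le_trans (le_max_left _ _) hj) (le_trans (le_max_right _ _) hj)
  · have := Nat.findGreatest_spec (P := fun i => i * ℓ i ≤ j) (m := 0) (n := j) (Nat.zero_le _) (by simp)
    exact this

theorem tk_getElem? (k : ℕ) (s : Seq3) (i : ℕ) :
    (tk k s)[i]? = if i < k then some (s i) else none := by
  induction k generalizing s i with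
  | zero => simp [tk]
  | succ k ih =>
    cases i with
    | zero => simp [tk]
    | succ i => simp [tk, ih, shift]

theorem closure_sub_DF {w : Seq3} : closure (Fr w) ⊆ DF w := by
  intro v hv
  obtain ⟨x, hx, hxv⟩ := mem_closure_iff_seq_limit.1 hv
  choose W hW hWne hWx using hx
  obtain ⟨i, hi, hiW⟩ := exists_slow (fun k => (W k).length)
  let V : ℕ → List (Fin 3) := fun j => W (i j)
  let L : ℕ → List (Fin 3) := fun j => Nat.rec [] (fun j l => l ++ V j) j
  have L0 : L 0 = [] := rfl
  have LS : ∀ j, L (j+1) = L j ++ V j := fun j => rfl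
  have hVpos : ∀ j, 1 ≤ (V j).length := fun j => List.length_pos_iff.2 (hWne _)
  have hLlen : ∀ j, j ≤ (L j).length := by
    intro j
    induction j with
    | zero => simp
    | succ j ih => rw [LS, List.length_append]; have := hVpos j; omega
  have hLgood : ∀ j, good w (L j) := by
    intro j
    induction j with
    | zero => trivial
    | succ j ih => rw [LS]; exact good_append ih (hW _)
  have hpre : ∀ j d, L j <+: L (j + d) := by
    intro j d
    induction d with
    | zero => exact List.prefix_refl _
    | succ d ih => exact ih.trans (by rw [← add_assoc, LS]; exact List.prefix_append _ _)
  have hpre' : ∀ {j k}, j ≤ k → L j <+: L k := by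
    intro j k h; obtain ⟨d, rfl⟩ := Nat.exists_eq_add_of_le h; exact hpre j d
  let s : Seq3 := fun r => (L (r+1)).getD r 0
  have hs : ∀ j r, r < (L j).length → (L j)[r]? = some (s r) := by
    intro j r hr
    have hr' : r < (L (r+1)).length := by have := hLlen (r+1); omega
    have e : (L (r+1))[r]? = some (s r) := by
      simp only [s, List.getD_eq_getElem?_getD, List.getElem?_eq_getElem hr', Option.getD_some]
    rw [← e]
    rcases le_total j (r+1) with h | h
    · obtain ⟨t, ht⟩ := hpre' h
      rw [← ht, List.getElem?_append_left hr]
    · obtain ⟨t, ht⟩ := hpre' h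
      rw [← ht, List.getElem?_append_left hr']
  have htk : ∀ j k, k ≤ (L j).length → tk k s = (L j).take k := by
    intro j k hk
    apply List.ext_getElem?
    intro n
    rw [tk_getElem?, List.getElem?_take]
    split_ifs with h
    · rw [hs j n (by omega)]
    · rfl
  refine ⟨s, mem_betaShift_of_wgood fun k => ?_, ?_⟩
  · rw [htk k k (hLlen k)]
    have := (hLgood k).wgood
    rw [← List.take_append_drop k (L k)] at this
    exact wgood_left this
  -- frequency
  have hcnt : ∀ j, cnt (L j) - ((L j).length : ℝ) • v =
      ∑ k ∈ Finset.range j, (cnt (V k) - ((V k).length : ℝ) • v) := by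
    intro j
    induction j with
    | zero => simp [L0, cnt]
    | succ j ih =>
      rw [Finset.sum_range_succ, ← ih, LS, cnt_append, List.length_append]; push_cast
      rw [add_smul]; abel
  have hlen : ∀ j, ((L j).length : ℝ) = ∑ k ∈ Finset.range j, ((V k).length : ℝ) := by
    intro j
    induction j with
    | zero => simp [L0]
    | succ j ih => rw [Finset.sum_range_succ, ← ih, LS, List.length_append]; push_cast; rfl
  have ho : (fun k => cnt (V k) - ((V k).length : ℝ) • v) =o[atTop]
      fun k => ((V k).length : ℝ) := by
    have h1 : Tendsto (fun k => x (i k) - v) atTop (𝓝 0) := by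
      have := (hxv.comp hi).sub_const v
      simpa using this
    rw [Asymptotics.isLittleO_iff]
    intro ε hε
    have h2 := (Metric.tendsto_nhds.1 h1) ε hε
    filter_upwards [h2] with k hk
    rw [dist_zero_right] at hk
    have hp : (0:ℝ) < (V k).length := length_pos' (hWne _)
    have : cnt (V k) - ((V k).length : ℝ) • v = ((V k).length : ℝ) • (x (i k) - v) := by
      rw [smul_sub, hWx, fr, smul_smul, mul_inv_cancel₀ hp.ne', one_smul]
    rw [this, norm_smul, mul_comm]
    exact mul_le_mul_of_nonneg_right hk.le (norm_nonneg _)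
  have hLt : Tendsto (fun j => ((L j).length : ℝ)) atTop atTop :=
    tendsto_atTop_mono (fun j => by exact_mod_cast hLlen j) tendsto_natCast_atTop_atTop
  have hO := ho.sum_range (fun k => by simp) (by simpa only [hlen] using hLt)
  simp only [← hcnt, ← hlen] at hO
  have hkey : (fun r : ℕ => birk s r - (r:ℝ) • v) =o[atTop] fun r : ℕ => (r : ℝ) := by
    rw [Asymptotics.isLittleO_iff]
    intro ε hε
    have hC : 0 < 2 + ‖v‖ := by positivity
    set δ := ε / (2 + ‖v‖) with hδ
    have hδp : 0 < δ := by positivity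
    rw [Asymptotics.isLittleO_iff] at hO
    obtain ⟨N, hN⟩ := exists_nat_gt (1/δ)
    obtain ⟨J, hJ⟩ := eventually_atTop.1 ((hO hδp).and (hi.eventually_ge_atTop (N+1)))
    filter_upwards [eventually_ge_atTop (L J).length] with r hr
    have hex : ∃ j, r < (L (j+1)).length := ⟨r, by have := hLlen (r+1); omega⟩
    classical
    obtain ⟨j, hj1, hj2⟩ : ∃ j, r < (L (j+1)).length ∧ (L j).length ≤ r := by
      refine ⟨Nat.find hex, Nat.find_spec hex, ?_⟩
      rcases hj : Nat.find hex with _ | m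
      · simp [L0]
      · exact not_lt.1 (Nat.find_min hex (m := m) (by omega))
    have hjJ : J ≤ j := by
      by_contra hc
      have := (hpre' (show j + 1 ≤ J by omega)).length_le
      omega
    obtain ⟨hb1, hb2⟩ := hJ j hjJ
    have e1 : tk r s = L j ++ tk (r - (L j).length) (shift^[(L j).length] s) := by
      conv_lhs => rw [show r = (L j).length + (r - (L j).length) by omega]
      rw [tk_add, htk j _ le_rfl, List.take_length]
    set y := tk (r - (L j).length) (shift^[(L j).length] s) with hy
    have hyl : y.length = r - (L j).length := tk_length _ _
    have hyV : y.length ≤ (V j).length := by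
      rw [hyl]; rw [LS, List.length_append] at hj1; omega
    have hVj : ((V j).length : ℝ) ≤ δ * (L j).length := by
      have h1 : (i j) * (V j).length ≤ j := hiW j
      have h2 : ((i j : ℕ):ℝ) * (V j).length ≤ (L j).length := by
        exact_mod_cast h1.trans (hLlen j)
      have h3 : 1/δ ≤ (i j : ℝ) := hN.le.trans (by exact_mod_cast (by omega : N ≤ i j))
      rw [div_le_iff₀ hδp] at h3
      have h0 : (0:ℝ) ≤ (V j).length := by positivity
      nlinarith
    have hrL : ((L j).length : ℝ) ≤ r := by exact_mod_cast hj2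
    have hdecomp : birk s r - (r:ℝ) • v = (cnt (L j) - ((L j).length:ℝ) • v) +
        (cnt y - (y.length : ℝ) • v) := by
      rw [birk_eq, e1, cnt_append]
      have : (r:ℝ) = (L j).length + y.length := by
        rw [hyl]; exact_mod_cast (by omega : r = (L j).length + (r - (L j).length))
      rw [this, add_smul]; abel
    rw [hdecomp]
    have hy2 : ‖cnt y - (y.length:ℝ) • v‖ ≤ (V j).length * (1 + ‖v‖) := by
      have a1 := norm_sub_le (cnt y) ((y.length:ℝ) • v)
      rw [norm_smul, Real.norm_of_nonneg (by positivity : (0:ℝ) ≤ y.length)] at a1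
      have a2 := norm_cnt_le y
      have a3 : (y.length : ℝ) ≤ (V j).length := by exact_mod_cast hyV
      have a4 := norm_nonneg v
      nlinarith
    rw [Real.norm_of_nonneg (by positivity)] at hb1 ⊢
    refine (norm_add_le _ _).trans ?_
    have h5 : (V j).length * (1 + ‖v‖) ≤ δ * (L j).length * (1 + ‖v‖) :=
      mul_le_mul_of_nonneg_right hVj (by positivity)
    have h6 : ε = δ * (2 + ‖v‖) := by rw [hδ]; field_simp
    rw [h6]
    have h7 : δ * (2 + ‖v‖) * (L j).length ≤ δ * (2 + ‖v‖) * r :=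
      mul_le_mul_of_nonneg_left hrL (by positivity)
    nlinarith
  have h8 : Tendsto (fun r : ℕ => (r:ℝ)⁻¹ • (birk s r - (r:ℝ) • v)) atTop (𝓝 0) := by
    have := hkey.tendsto_inv_smul_nhds_zero
    exact this
  have h9 := h8.add_const v
  rw [zero_add] at h9
  refine h9.congr' ?_
  filter_upwards [eventually_ge_atTop 1] with r hr
  have : (r:ℝ) ≠ 0 := by positivity
  rw [smul_sub, smul_smul, inv_mul_cancel₀ this, one_smul, sub_add_cancel]

theorem DF_eq {w : Seq3} (hw : w 0 = 2) : DF w = closure (Fr w) :=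
  (DF_sub_closure hw).antisymm closure_sub_DF

theorem Fr_sub_DF {w : Seq3} : Fr w ⊆ DF w := subset_closure.trans closure_sub_DF

theorem isClosed_DF {w : Seq3} (hw : w 0 = 2) : IsClosed (DF w) := by
  rw [DF_eq hw]; exact isClosed_closure

theorem DF_nonneg {w : Seq3} (hw : w 0 = 2) (g : (Fin 3 → ℝ) →ₗ[ℝ] ℝ)
    (hg : ∀ l, good w l → 0 ≤ g (cnt l)) {x : Fin 3 → ℝ} (hx : x ∈ DF w) : 0 ≤ g x := by
  have hc : IsClosed {x | 0 ≤ g x} :=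
    isClosed_le continuous_const g.continuous_of_finiteDimensional
  rw [DF_eq hw] at hx
  refine closure_minimal ?_ hc hx
  rintro y ⟨l, hl, hne, rfl⟩
  simp only [fr, Set.mem_ofPred_eq, map_smul, smul_eq_mul]
  exact mul_nonneg (by positivity) (hg l hl)

theorem DF_sg {w : Seq3} (hw : w 0 = 2) {x : Fin 3 → ℝ} (hx : x ∈ DF w) : sg x = 1 := by
  have hc : IsClosed {x | sg x = 1} :=
    isClosed_eq sg.continuous_of_finiteDimensional continuous_const
  rw [DF_eq hw] at hx
  refine closure_minimal ?_ hc hx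
  rintro y ⟨l, hl, hne, rfl⟩
  exact sg_fr hne

theorem isCompact_DF {w : Seq3} (hw : w 0 = 2) : IsCompact (DF w) := by
  refine Metric.isCompact_of_isClosed_isBounded (isClosed_DF hw) ?_
  refine (Metric.isBounded_closedBall (x := (0 : Fin 3 → ℝ)) (r := 1)).subset ?_
  rw [DF_eq hw]
  refine closure_minimal ?_ Metric.isClosed_closedBall
  rintro y ⟨l, hl, hne, rfl⟩
  rw [mem_closedBall_zero_iff, fr, norm_smul, Real.norm_of_nonneg (by positivity)]
  have := length_pos' hne
  rw [inv_mul_le_iff₀ this, mul_one]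
  exact norm_cnt_le l

theorem convex_DF {w : Seq3} (hw : w 0 = 2) : Convex ℝ (DF w) := by
  rw [DF_eq hw]
  intro a ha b hb α β hα hβ hαβ
  have hcont : Continuous (fun p : (Fin 3 → ℝ) × (Fin 3 → ℝ) => α • p.1 + β • p.2) := by fun_prop
  rw [← closure_closure]
  refine map_mem_closure₂ (f := fun x y => α • x + β • y) hcont ha hb ?_
  rintro x ⟨W, hW, hWn, rfl⟩ y ⟨W', hW', hWn', rfl⟩
  have hp := length_pos' hWn
  have hp' := length_pos' hWn'
  have hcast : Tendsto (fun k : ℕ => (k:ℝ)) atTop atTop := tendsto_natCast_atTop_atTop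
  have h1 := (tendsto_nat_floor_mul_div_atTop hα).comp hcast
  have h2 := (tendsto_nat_floor_mul_div_atTop hβ).comp hcast
  have h12 := h1.add h2
  have h3 := (h12.inv₀ (by rw [hαβ]; exact one_ne_zero)).smul
    ((h1.smul_const (fr W)).add (h2.smul_const (fr W')))
  rw [hαβ, inv_one, one_smul] at h3
  refine mem_closure_of_tendsto h3 ?_
  have h4 := h12.eventually (isOpen_ne.mem_nhds (show α + β ≠ 0 by rw [hαβ]; exact one_ne_zero))
  filter_upwards [h4, eventually_ge_atTop 1] with k hk hk1
  have hk0 : (k:ℝ) ≠ 0 := by positivity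
  simp only [Function.comp] at hk ⊢
  set p := ⌊α * (k:ℝ)⌋₊
  set q := ⌊β * (k:ℝ)⌋₊
  have hpq : (p:ℝ) + q ≠ 0 := by
    intro h; apply hk; rw [← add_div, h, zero_div]
  refine ⟨rep (p * W'.length) W ++ rep (q * W.length) W',
    good_append (good_rep hW _) (good_rep hW' _), ?_, ?_⟩
  · intro h
    apply_fun List.length at h
    simp only [List.length_append, length_rep, List.length_nil] at h
    apply hpq
    have h' : ((p * W'.length * W.length + q * W.length * W'.length : ℕ) : ℝ) = 0 := by
      exact_mod_cast h
    push_cast at h'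
    have : ((p:ℝ) + q) * (W.length * W'.length) = 0 := by linear_combination h'
    rcases mul_eq_zero.1 this with h | h
    · exact h
    · exact absurd h (by positivity)
  · simp only [fr, cnt_append, cnt_rep, List.length_append, length_rep]
    push_cast
    ext i
    simp only [Pi.smul_apply, Pi.add_apply, smul_eq_mul]
    have : (p:ℝ) * W'.length * W.length + q * W.length * W'.length ≠ 0 := by
      have : (p:ℝ) * W'.length * W.length + q * W.length * W'.length =
        ((p:ℝ) + q) * (W.length * W'.length) := by ring
      rw [this]; exact mul_ne_zero hpq (by positivity)
    have e : (p:ℝ) * W'.length * W.length + q * W.length * W'.length =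
        ((p:ℝ) + q) * (W.length * W'.length) := by ring
    rw [e]
    field_simp

theorem ev_mem_DF {w : Seq3} (hw : w 0 = 2) : ev 0 ∈ DF w := by
  apply Fr_sub_DF
  refine ⟨[0], good_zeros hw (by simp), by simp, ?_⟩
  simp [fr, cnt]

theorem cnt_tk_mul (M k : ℕ) (s : Seq3) :
    cnt (tk (M * k) s) = ∑ j ∈ Finset.range k, cnt (tk M (shift^[M*j] s)) := by
  induction k with
  | zero => simp [tk, cnt]
  | succ k ih => rw [Finset.sum_range_succ, ← ih, Nat.mul_succ, tk_add, cnt_append]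

theorem DF_infDist {w w' : Seq3} (hw' : w' 0 = 2) {M : ℕ} (hM : 1 ≤ M)
    (h : ∀ i < M, w i = w' i) {v : Fin 3 → ℝ} (hv : v ∈ DF w) :
    Metric.infDist v (DF w') ≤ (M:ℝ)⁻¹ := by
  obtain ⟨s, hs, hsv⟩ := hv
  have hM0 : (0:ℝ) < M := by exact_mod_cast hM
  have hlim : Tendsto (fun k : ℕ => M * k) atTop atTop :=
    tendsto_id.const_mul_atTop' (by omega)
  have h1 := ((Metric.continuous_infDist_pt (DF w')).tendsto v).comp (hsv.comp hlim)
  refine le_of_tendsto h1 ?_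
  filter_upwards [eventually_ge_atTop 1] with k hk
  have hk0 : (0:ℝ) < k := by exact_mod_cast hk
  simp only [Function.comp]
  let d : ℕ → List (Fin 3) := fun j => dec (tk M (shift^[M*j] s))
  have hd : ∀ j, fr (d j) ∈ DF w' := by
    intro j
    apply Fr_sub_DF
    refine ⟨d j, good_dec hw' (wgood_congr (w := w) ?_ (wgood_tk hs _ _)), ?_, rfl⟩
    · rw [tk_length]; exact h
    · rw [← List.length_pos_iff, dec_length, tk_length]; omega
  have hmem : ∑ j ∈ Finset.range k, (k:ℝ)⁻¹ • fr (d j) ∈ DF w' := by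
    refine (convex_DF hw').sum_mem (fun _ _ => by positivity) ?_ fun j _ => hd j
    simp [hk0.ne']
  refine (Metric.infDist_le_dist_of_mem hmem).trans ?_
  rw [dist_eq_norm, birk_eq, cnt_tk_mul, Finset.smul_sum, ← Finset.sum_sub_distrib]
  have hterm : ∀ j ∈ Finset.range k, ‖((M * k : ℕ) : ℝ)⁻¹ • cnt (tk M (shift^[M*j] s)) -
      (k:ℝ)⁻¹ • fr (d j)‖ ≤ (M:ℝ)⁻¹ * (k:ℝ)⁻¹ := by
    intro j _
    have : ((M * k : ℕ) : ℝ)⁻¹ • cnt (tk M (shift^[M*j] s)) - (k:ℝ)⁻¹ • fr (d j) =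
        -(((M:ℝ)⁻¹ * (k:ℝ)⁻¹) • (cnt (d j) - cnt (tk M (shift^[M*j] s)))) := by
      simp only [fr, d, dec_length, tk_length, smul_smul, smul_sub]
      push_cast
      rw [mul_inv, mul_comm (k:ℝ)⁻¹]; abel
    rw [this, norm_neg, norm_smul, Real.norm_of_nonneg (by positivity)]
    exact mul_le_of_le_one_right (by positivity) (norm_dec _)
  refine (norm_sum_le_of_le _ hterm).trans ?_
  rw [Finset.sum_const, Finset.card_range, nsmul_eq_mul]
  field_simp
  rfl


/-! ## Substitutions -/

def cns (a : Fin 3) (s : Seq3) : Seq3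
  | 0 => a
  | k+1 => s k

def app : List (Fin 3) → Seq3 → Seq3
  | [], s => s
  | a :: l, s => cns a (app l s)

theorem shift_cns (a : Fin 3) (s : Seq3) : shift (cns a s) = s := rfl
theorem cns_zero (a : Fin 3) (s : Seq3) : cns a s 0 = a := rfl

theorem cns_shift (s : Seq3) : cns (s 0) (shift s) = s := by
  funext k; cases k <;> rfl

theorem app_append (l l' : List (Fin 3)) (s : Seq3) : app (l ++ l') s = app l (app l' s) := by
  induction l with
  | nil => rfl
  | cons a l ih => simp [app, ih]

theorem app_apply (l : List (Fin 3)) (s : Seq3) (k : ℕ) :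
    app l s k = if k < l.length then l.getD k 0 else s (k - l.length) := by
  induction l generalizing k with
  | nil => simp [app]
  | cons a l ih =>
    cases k with
    | zero => simp [app, cns]
    | succ k => simp only [app, cns, ih, List.length_cons, Nat.add_lt_add_iff_right,
        List.getD_cons_succ, Nat.add_sub_add_right]

def blk (n : ℕ) (a : Fin 3) : List (Fin 3) :=
  if a = 0 then [1] else if a = 1 then 2 :: List.replicate (n+1) 0 else 2 :: List.replicate n 0

theorem blk0 (n : ℕ) : blk n 0 = [1] := rfl
theorem blk1 (n : ℕ) : blk n 1 = 2 :: List.replicate (n+1) 0 := rfl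
theorem blk2 (n : ℕ) : blk n 2 = 2 :: List.replicate n 0 := rfl

theorem fin3 (a : Fin 3) : a = 0 ∨ a = 1 ∨ a = 2 := by fin_cases a <;> simp

def subL (n : ℕ) (l : List (Fin 3)) : List (Fin 3) := l.flatMap (blk n)

theorem subL_cons (n : ℕ) (a : Fin 3) (l : List (Fin 3)) :
    subL n (a :: l) = blk n a ++ subL n l := rfl

theorem subL_append (n : ℕ) (l l' : List (Fin 3)) :
    subL n (l ++ l') = subL n l ++ subL n l' := by simp [subL]

theorem blk_length (n : ℕ) (a : Fin 3) : 1 ≤ (blk n a).length := by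
  rcases fin3 a with rfl | rfl | rfl <;> simp [blk0, blk1, blk2]

theorem subL_length (n : ℕ) (l : List (Fin 3)) : l.length ≤ (subL n l).length := by
  induction l with
  | nil => simp
  | cons a l ih =>
    rw [subL_cons, List.length_append, List.length_cons]
    have := blk_length n a; omega

def sub (n : ℕ) (s : Seq3) : Seq3 := fun k => (subL n (tk (k+1) s)).getD k 0

theorem sub_get {n : ℕ} {s : Seq3} {k K : ℕ} (h : k + 1 ≤ K) :
    sub n s k = (subL n (tk K s)).getD k 0 := by
  obtain ⟨j, rfl⟩ := Nat.exists_eq_add_of_le h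
  rw [tk_add, subL_append, List.getD_append]
  · rfl
  · have := subL_length n (tk (k+1) s); rw [tk_length] at this; omega

theorem sub_eq (n : ℕ) (s : Seq3) : sub n s = app (blk n (s 0)) (sub n (shift s)) := by
  funext k
  rw [app_apply]
  have hb := blk_length n (s 0)
  have h1 : sub n s k = (blk n (s 0) ++ subL n (tk k (shift s))).getD k 0 := rfl
  rw [h1]
  split_ifs with h
  · rw [List.getD_append _ _ _ _ h]
  · rw [List.getD_append_right _ _ _ _ (by omega)]
    rw [sub_get (K := k)]
    omega

theorem sub_cns (n : ℕ) (a : Fin 3) (s : Seq3) : sub n (cns a s) = app (blk n a) (sub n s) := 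
  sub_eq n _

theorem sub_app (n : ℕ) (l : List (Fin 3)) (s : Seq3) :
    sub n (app l s) = app (subL n l) (sub n s) := by
  induction l with
  | nil => rfl
  | cons a l ih => rw [app, sub_cns, ih, subL_cons, app_append]

theorem sub_zero_ne (n : ℕ) (s : Seq3) : sub n s 0 ≠ 0 := by
  rw [sub_eq]
  rcases fin3 (s 0) with h | h | h <;> rw [h] <;> simp [blk0, blk1, blk2, app, cns]

theorem sub_zero_of_ne (n : ℕ) {s : Seq3} (h : s 0 ≠ 0) : sub n s 0 = 2 := by
  rw [sub_eq]
  rcases fin3 (s 0) with h' | h' | h'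
  · exact (h h').elim
  all_goals rw [h']; simp [blk1, blk2, app, cns]

theorem ltp_app (l x : List (Fin 3)) (s : Seq3) : ltp (l ++ x) (app l s) ↔ ltp x s := by
  induction l with
  | nil => rfl
  | cons a l ih => simp [app, ltp, cns_zero, shift_cns, ih]

theorem blk12 (n : ℕ) : blk n 1 = blk n 2 ++ [0] := by
  rw [blk1, blk2, List.replicate_succ']; rfl

theorem ltp_subL (n : ℕ) {x : List (Fin 3)} {w : Seq3} (h : ltp x w) :
    ltp (subL n x) (sub n w) := by
  induction x generalizing w with
  | nil => exact h.elim
  | cons a l ih =>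
    rw [subL_cons, sub_eq]
    rcases h with h | ⟨h, h'⟩
    · rcases fin3 a with rfl | rfl | rfl
      · have : w 0 ≠ 0 := h.ne'
        left
        rw [← sub_eq, sub_zero_of_ne n this]
        decide
      · have : w 0 = 2 := by
          rcases fin3 (w 0) with h' | h' | h' <;> rw [h'] at h ⊢ <;> revert h <;> decide
        rw [this, blk12, List.append_assoc, ltp_app]
        left
        exact Fin.pos_iff_ne_zero.2 (sub_zero_ne _ _)
      · exfalso
        rcases fin3 (w 0) with h' | h' | h' <;> rw [h'] at h <;> revert h <;> decide
    · rw [← h, ltp_app]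
      exact ih h'

theorem good_subL (n : ℕ) {l : List (Fin 3)} {w : Seq3} (hw : w 0 = 2) (h : good w l) :
    good (sub n w) (subL n l) := by
  have h2 : sub n w 0 = 2 := sub_zero_of_ne n (by rw [hw]; decide)
  induction l with
  | nil => trivial
  | cons a l ih =>
    have h1 := ltp_subL n h.1
    have h3 := ih h.2
    rw [subL_cons] at h1 ⊢
    rcases fin3 a with rfl | rfl | rfl
    · exact ⟨h1, h3⟩
    all_goals
      refine ⟨h1, good_append (good_zeros h2 ?_) h3⟩
      intro x hx; exact List.eq_of_mem_replicate hx

/-! order -/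
def slt (s t : Seq3) : Prop := ∃ n, (∀ i, i < n → s i = t i) ∧ s n < t n

theorem slt.le {s t : Seq3} (h : slt s t) : lexLe s t := Or.inr h

theorem not_slt_of_le {s t : Seq3} (h : lexLe s t) : ¬ slt t s := by
  rintro ⟨n, h1, h2⟩
  exact absurd ((lexLe_iff _ _).1 h n fun i hi => (h1 i hi).symm) (not_le.2 h2)

theorem slt_of_head {s t : Seq3} (h : s 0 < t 0) : slt s t := ⟨0, by simp, h⟩

theorem slt_cns {s t : Seq3} (a : Fin 3) (h : slt s t) : slt (cns a s) (cns a t) := by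
  obtain ⟨n, h1, h2⟩ := h
  refine ⟨n+1, fun i hi => ?_, h2⟩
  cases i with
  | zero => rfl
  | succ i => exact h1 i (by omega)

theorem slt_app {s t : Seq3} (l : List (Fin 3)) (h : slt s t) : slt (app l s) (app l t) := by
  induction l with
  | nil => exact h
  | cons a l ih => exact slt_cns a ih

theorem slt_sub (k : ℕ) {s t : Seq3} (h : slt s t) : slt (sub k s) (sub k t) := by
  obtain ⟨n, h1, h2⟩ := h
  induction n generalizing s t with
  | zero =>
    rcases fin3 (s 0) with h | h | h
    · apply slt_of_head
      rw [sub_zero_of_ne k (s := t) (h2.ne_bot), sub_eq, h]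
      exact (by decide : (1 : Fin 3) < 2)
    · have ht : t 0 = 2 := by
        rcases fin3 (t 0) with h' | h' | h' <;> rw [h, h'] at h2 <;> revert h2 <;> simp [h']
      rw [sub_eq, sub_eq k t, h, ht, blk12, app_append]
      apply slt_app
      apply slt_of_head
      exact Fin.pos_iff_ne_zero.2 (sub_zero_ne _ _)
    · exfalso
      rcases fin3 (t 0) with h' | h' | h' <;> rw [h, h'] at h2 <;> revert h2 <;> decide
  | succ n ih =>
    rw [sub_eq, sub_eq k t, h1 0 (by omega)]
    exact slt_app _ (ih (fun i hi => h1 (i+1) (by omega)) h2)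

theorem lexLe_sub (k : ℕ) {s t : Seq3} (h : lexLe s t) : lexLe (sub k s) (sub k t) := by
  rcases h with rfl | h
  · exact lexLe_refl _
  · exact (slt_sub k h).le

theorem shift_sub (n r : ℕ) (s : Seq3) :
    ∃ i j, shift^[r] (sub n s) = app (List.replicate i 0) (sub n (shift^[j] s)) := by
  induction r with
  | zero => exact ⟨0, 0, rfl⟩
  | succ r ih =>
    obtain ⟨i, j, h⟩ := ih
    rw [Function.iterate_succ_apply', h]
    cases i with
    | succ i => exact ⟨i, j, rfl⟩
    | zero =>
      have : ∀ t : Seq3, ∃ i, shift (sub n t) = app (List.replicate i 0) (sub n (shift t)) := by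
        intro t
        rw [sub_eq]
        rcases fin3 (t 0) with h | h | h <;> rw [h]
        · exact ⟨0, rfl⟩
        · exact ⟨n+1, rfl⟩
        · exact ⟨n, rfl⟩
      obtain ⟨i, hi⟩ := this (shift^[j] s)
      refine ⟨i, j+1, ?_⟩
      rw [Function.iterate_succ_apply', ← hi]; rfl

theorem sub_mem_Max (n : ℕ) {w : Seq3} (hw : w ∈ MaxSet) : sub n w ∈ MaxSet := by
  have h2 : sub n w 0 = 2 := sub_zero_of_ne n (by rw [hw.1]; decide)
  refine ⟨h2, fun r => ?_⟩
  obtain ⟨i, j, h⟩ := shift_sub n r w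
  rw [h]
  cases i with
  | zero => exact lexLe_sub n (hw.2 j)
  | succ i =>
    apply slt.le
    apply slt_of_head
    rw [h2]; simp [List.replicate_succ, app, cns_zero]

/-! agreement -/
def agr (M : ℕ) (s t : Seq3) : Prop := ∀ i < M, s i = t i

theorem agr.symm {M : ℕ} {s t : Seq3} (h : agr M s t) : agr M t s := fun i hi => (h i hi).symm
theorem agr.trans {M : ℕ} {s t u : Seq3} (h : agr M s t) (h' : agr M t u) : agr M s u :=
  fun i hi => (h i hi).trans (h' i hi)
theorem agr.mono {M N : ℕ} {s t : Seq3} (h : agr M s t) (h' : N ≤ M) : agr N s t :=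
  fun i hi => h i (by omega)

theorem agr_app {M : ℕ} {s t : Seq3} (l : List (Fin 3)) (h : agr M s t) :
    agr (M + l.length) (app l s) (app l t) := by
  intro i hi
  rw [app_apply, app_apply]
  split_ifs
  · rfl
  · exact h _ (by omega)

theorem agr_sub (n : ℕ) {M : ℕ} {s t : Seq3} (h : agr M s t) : agr M (sub n s) (sub n t) := by
  induction M generalizing s t with
  | zero => intro i hi; omega
  | succ M ih =>
    rw [sub_eq, sub_eq n t, h 0 (by omega)]
    refine (agr_app _ (ih fun i hi => h (i+1) (by omega))).mono ?_
    have := blk_length n (t 0); omega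

theorem agr_sub2 (n m : ℕ) {M : ℕ} {s t : Seq3} (h : agr M s t) :
    agr (M+1) (sub n (sub m s)) (sub n (sub m t)) := by
  induction M generalizing s t with
  | zero =>
    intro i hi
    obtain rfl : i = 0 := by omega
    rw [sub_zero_of_ne _ (sub_zero_ne _ _), sub_zero_of_ne _ (sub_zero_ne _ _)]
  | succ M ih =>
    rw [sub_eq m s, sub_eq m t, h 0 (by omega), sub_app, sub_app]
    refine (agr_app _ (ih fun i hi => h (i+1) (by omega))).mono ?_
    have := blk_length m (t 0)
    have := subL_length n (blk m (t 0)); omega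

theorem agr_sandwich {M : ℕ} {a w b : Seq3} (h1 : lexLe a w) (h2 : lexLe w b) (h : agr M a b) :
    agr M a w := by
  intro i
  induction i using Nat.strong_induction_on with
  | _ i ih =>
    intro hi
    apply le_antisymm
    · exact (lexLe_iff _ _).1 h1 i fun j hj => ih j hj (by omega)
    · rw [h i hi]
      exact (lexLe_iff _ _).1 h2 i fun j hj => (ih j hj (by omega)).symm.trans (h j (by omega))

/-! the words -/
def zs : Seq3 := fun _ => 0
def w20 : Seq3 := cns 2 zs
def w22 : Seq3 := fun _ => 2

theorem w20_mem : w20 ∈ MaxSet := by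
  refine ⟨rfl, fun r => ?_⟩
  cases r with
  | zero => exact lexLe_refl _
  | succ r =>
    apply slt.le; apply slt_of_head
    rw [shift_iter]
    exact (by decide : (0 : Fin 3) < 2)

theorem w22_mem : w22 ∈ MaxSet := by
  refine ⟨rfl, fun r => Or.inl ?_⟩
  funext i; rw [shift_iter]; rfl

def subs : List ℕ → Seq3 → Seq3
  | [], s => s
  | n :: u, s => sub n (subs u s)

theorem subs_append (u v : List ℕ) (s : Seq3) : subs (u ++ v) s = subs u (subs v s) := by
  induction u with
  | nil => rfl
  | cons n u ih => simp [subs, ih]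

def subLs : List ℕ → List (Fin 3) → List (Fin 3)
  | [], s => s
  | n :: u, s => subL n (subLs u s)

def wm (u : List ℕ) : Seq3 := subs u w20
def wp (u : List ℕ) : Seq3 := subs u w22

theorem subs_zero (u : List ℕ) {s : Seq3} (h : s 0 = 2) : subs u s 0 = 2 := by
  induction u with
  | nil => exact h
  | cons n u ih => exact sub_zero_of_ne n (by rw [ih]; decide)

theorem subs_mem (u : List ℕ) {s : Seq3} (h : s ∈ MaxSet) : subs u s ∈ MaxSet := by
  induction u with
  | nil => exact h
  | cons n u ih => exact sub_mem_Max n ih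

theorem wm0 (u : List ℕ) : wm u 0 = 2 := subs_zero u rfl
theorem wp0 (u : List ℕ) : wp u 0 = 2 := subs_zero u rfl
theorem wm_mem (u : List ℕ) : wm u ∈ MaxSet := subs_mem u w20_mem
theorem wp_mem (u : List ℕ) : wp u ∈ MaxSet := subs_mem u w22_mem

theorem lexLe_subs (u : List ℕ) {s t : Seq3} (h : lexLe s t) : lexLe (subs u s) (subs u t) := by
  induction u with
  | nil => exact h
  | cons n u ih => exact lexLe_sub n ih

theorem slt_subs (u : List ℕ) {s t : Seq3} (h : slt s t) : slt (subs u s) (subs u t) := by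
  induction u with
  | nil => exact h
  | cons n u ih => exact slt_sub n ih

theorem agr_subs (u : List ℕ) {M : ℕ} {s t : Seq3} (h : agr M s t) :
    agr M (subs u s) (subs u t) := by
  induction u with
  | nil => exact h
  | cons n u ih => exact agr_sub n ih

theorem agr_subs2 (M : ℕ) (u : List ℕ) (hu : 2 * M ≤ u.length) (s t : Seq3) :
    agr M (subs u s) (subs u t) := by
  induction M generalizing u with
  | zero => intro i hi; omega
  | succ M ih =>
    match u, hu with
    | n :: m :: u, hu =>
      refine agr_sub2 n m (ih u ?_)
      simp at hu; omega

theorem le_w22 (s : Seq3) : lexLe s w22 := by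
  rw [lexLe_iff]; intro n _; exact Fin.le_last _

theorem w20_le {s : Seq3} (h : s 0 = 2) : lexLe w20 s := by
  rw [lexLe_iff]; intro n _
  cases n with
  | zero => exact h.symm.le
  | succ n => exact Fin.zero_le _

theorem good_subLs (u : List ℕ) {l : List (Fin 3)} {w : Seq3} (hw : w 0 = 2) (h : good w l) :
    good (subs u w) (subLs u l) := by
  induction u with
  | nil => exact h
  | cons n u ih => exact good_subL n (subs_zero u hw) ih

theorem agr_sub_w20 (n : ℕ) {s : Seq3} (h : s 0 = 2) : agr (n+1) (sub n s) w20 := by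
  rw [sub_eq, h, blk2]
  intro i hi
  cases i with
  | zero => rfl
  | succ i =>
    simp only [app, cns]
    rw [app_apply, List.length_replicate, if_pos (by omega)]
    simp [w20, cns, zs, show i < n by omega]


/-! ## Linear maps -/

def A (n : ℕ) : (Fin 3 → ℝ) →ₗ[ℝ] (Fin 3 → ℝ) where
  toFun x := ![(n+1) * x 1 + n * x 2, x 0, x 1 + x 2]
  map_add' x y := by
    ext i; fin_cases i <;> simp <;> ring
  map_smul' c x := by
    ext i; fin_cases i <;> simp <;> ring

def B (n : ℕ) : (Fin 3 → ℝ) →ₗ[ℝ] (Fin 3 → ℝ) where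
  toFun x := ![x 1, x 0 - n * x 2, (n+1) * x 2 - x 0]
  map_add' x y := by
    ext i; fin_cases i <;> simp <;> ring
  map_smul' c x := by
    ext i; fin_cases i <;> simp <;> ring

theorem A_apply (n : ℕ) (x : Fin 3 → ℝ) : A n x = ![(n+1) * x 1 + n * x 2, x 0, x 1 + x 2] := rfl
theorem B_apply (n : ℕ) (x : Fin 3 → ℝ) : B n x = ![x 1, x 0 - n * x 2, (n+1) * x 2 - x 0] := rfl
theorem A0 (n : ℕ) (x : Fin 3 → ℝ) : A n x 0 = (n+1) * x 1 + n * x 2 := rfl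
theorem A1 (n : ℕ) (x : Fin 3 → ℝ) : A n x 1 = x 0 := rfl
theorem A2 (n : ℕ) (x : Fin 3 → ℝ) : A n x 2 = x 1 + x 2 := rfl
theorem B0 (n : ℕ) (x : Fin 3 → ℝ) : B n x 0 = x 1 := rfl
theorem B1 (n : ℕ) (x : Fin 3 → ℝ) : B n x 1 = x 0 - n * x 2 := rfl
theorem B2 (n : ℕ) (x : Fin 3 → ℝ) : B n x 2 = (n+1) * x 2 - x 0 := rfl

theorem BA (n : ℕ) (x : Fin 3 → ℝ) : B n (A n x) = x := by
  ext i; fin_cases i <;> simp [A_apply, B_apply] <;> ring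
theorem AB (n : ℕ) (x : Fin 3 → ℝ) : A n (B n x) = x := by
  ext i; fin_cases i <;> simp [A_apply, B_apply] <;> ring

theorem cnt_replicate0 (n : ℕ) : cnt (List.replicate n 0) = (n : ℝ) • ev 0 := by
  induction n with
  | zero => simp [cnt]
  | succ n ih => simp [List.replicate_succ, cnt, ih, add_smul, add_comm]

theorem cnt_blk (n : ℕ) (a : Fin 3) : cnt (blk n a) = A n (ev a) := by
  rcases fin3 a with rfl | rfl | rfl
  · rw [blk0]; ext i; fin_cases i <;> simp [cnt, ev, A_apply]
  · rw [blk1, cnt, cnt_replicate0]; ext i; fin_cases i <;> simp [ev, A_apply]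
  · rw [blk2, cnt, cnt_replicate0]; ext i; fin_cases i <;> simp [ev, A_apply]

theorem cnt_subL (n : ℕ) (l : List (Fin 3)) : cnt (subL n l) = A n (cnt l) := by
  induction l with
  | nil => simp [subL, cnt]
  | cons a l ih => rw [subL_cons, cnt_append, ih, cnt_blk, cnt, map_add]

def AL : List ℕ → (Fin 3 → ℝ) →ₗ[ℝ] (Fin 3 → ℝ)
  | [] => LinearMap.id
  | n :: u => A n ∘ₗ AL u

def BL : List ℕ → (Fin 3 → ℝ) →ₗ[ℝ] (Fin 3 → ℝ)
  | [] => LinearMap.id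
  | n :: u => BL u ∘ₗ B n

theorem AL_nil (x) : AL [] x = x := rfl
theorem BL_nil (x) : BL [] x = x := rfl
theorem AL_cons (n u x) : AL (n :: u) x = A n (AL u x) := rfl
theorem BL_cons (n u x) : BL (n :: u) x = BL u (B n x) := rfl

theorem AL_append (u v x) : AL (u ++ v) x = AL u (AL v x) := by
  induction u with
  | nil => rfl
  | cons n u ih => simp [AL_cons, ih]

theorem BL_append (u v x) : BL (u ++ v) x = BL v (BL u x) := by
  induction u generalizing x with
  | nil => rfl
  | cons n u ih => simp [BL_cons, ih]

theorem BLAL (u x) : BL u (AL u x) = x := by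
  induction u with
  | nil => rfl
  | cons n u ih => simp [AL_cons, BL_cons, BA, ih]

theorem ALBL (u x) : AL u (BL u x) = x := by
  induction u generalizing x with
  | nil => rfl
  | cons n u ih => simp [AL_cons, BL_cons, AB, ih]

theorem cnt_subLs (u : List ℕ) (l : List (Fin 3)) : cnt (subLs u l) = AL u (cnt l) := by
  induction u with
  | nil => rfl
  | cons n u ih => rw [subLs, cnt_subL, ih, AL_cons]

/-! ## parsing -/

def Xt (n : ℕ) : List (Option (Fin 3)) → List (Fin 3)
  | [] => []
  | none :: τ => 0 :: Xt n τ
  | some a :: τ => blk n a ++ Xt n τ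

def vld : List (Option (Fin 3)) → Prop
  | [] => True
  | a :: τ => (a = some 2 → τ.head? ≠ some none) ∧ vld τ

theorem Xt_append (n τ τ') : Xt n (τ ++ τ') = Xt n τ ++ Xt n τ' := by
  induction τ with
  | nil => rfl
  | cons a τ ih => cases a <;> simp [Xt, ih]

theorem vld_right {τ τ'} (h : vld (τ ++ τ')) : vld τ' := by
  induction τ with
  | nil => exact h
  | cons a τ ih => exact ih h.2

theorem Xt_head0 {n τ l} (h : Xt n τ = 0 :: l) : ∃ τ', τ = none :: τ' ∧ Xt n τ' = l := by
  match τ, h with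
  | [], h => simp [Xt] at h
  | none :: τ, h => exact ⟨τ, rfl, by simpa [Xt] using h⟩
  | some a :: τ, h =>
    exfalso
    rcases fin3 a with rfl | rfl | rfl <;> simp [Xt, blk0, blk1, blk2] at h

theorem Xt_zeros {n τ l} (k : ℕ) (h : Xt n τ = List.replicate k 0 ++ l) (hv : vld τ) :
    ∃ τ', Xt n τ' = l ∧ vld τ' := by
  induction k generalizing τ with
  | zero => exact ⟨τ, h, hv⟩
  | succ k ih =>
    rw [List.replicate_succ, List.cons_append] at h
    obtain ⟨τ', rfl, h'⟩ := Xt_head0 h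
    exact ih h' hv.2

theorem ltp_zeros {k : ℕ} {l : List (Fin 3)} {s : Seq3} (h : ltp l (app (List.replicate k 0) s)) :
    ∃ l', l = List.replicate k 0 ++ l' := by
  induction k generalizing l with
  | zero => exact ⟨l, rfl⟩
  | succ k ih =>
    cases l with
    | nil => exact h.elim
    | cons a l =>
      rcases h with h | ⟨h, h'⟩
      · exact absurd h (Fin.not_lt_zero _)
      · obtain ⟨l', hl⟩ := ih h'
        refine ⟨l', ?_⟩
        rw [hl, h]; rfl

theorem exists_parse {n : ℕ} {w : Seq3} (hw : w 0 = 2) {W : List (Fin 3)} (h : good (sub n w) W) :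
    ∃ τ, Xt n τ = W ∧ vld τ := by
  induction W with
  | nil => exact ⟨[], rfl, trivial⟩
  | cons a l ih =>
    obtain ⟨τ, hτ, hv⟩ := ih h.2
    rcases fin3 a with rfl | rfl | rfl
    · exact ⟨none :: τ, by simp [Xt, hτ], by simp [vld, hv]⟩
    · exact ⟨some 0 :: τ, by simp [Xt, hτ, blk0], by simp [vld, hv]⟩
    · have h1 := h.1
      rw [sub_eq, hw, blk2] at h1
      have h2 : ltp l (app (List.replicate n 0) (sub n (shift w))) := by
        rcases h1 with h1 | h1
        · exact absurd h1 (lt_irrefl _)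
        · exact h1.2
      obtain ⟨l', rfl⟩ := ltp_zeros h2
      obtain ⟨τ', h3, h4⟩ := Xt_zeros n hτ hv
      by_cases hh : τ'.head? = some none
      · obtain ⟨τ'', rfl⟩ : ∃ τ'', τ' = none :: τ'' := by
          cases τ' with
          | nil => simp at hh
          | cons b τ'' => simp at hh; exact ⟨τ'', by rw [hh]⟩
        refine ⟨some 1 :: τ'', ?_, by simp, h4.2⟩
        rw [← h3, Xt, Xt, blk1, List.replicate_succ']
        simp
      · refine ⟨some 2 :: τ', ?_, fun _ => hh, h4⟩
        rw [← h3, Xt, blk2]; rfl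

theorem lep_of_parse {n : ℕ} {w : Seq3} {x : List (Fin 3)} {τ : List (Option (Fin 3))}
    (hv : vld (x.map some ++ τ)) (h : x = [] ∨ ltp (Xt n (x.map some ++ τ)) (sub n w)) :
    lep x w := by
  induction x generalizing w with
  | nil => trivial
  | cons a x ih =>
    have h : ltp (Xt n ((a :: x).map some ++ τ)) (sub n w) := by simpa using h
    rw [sub_eq] at h
    simp only [List.map_cons, List.cons_append, Xt] at h
    simp only [List.map_cons, List.cons_append] at hv
    rcases lt_trichotomy a (w 0) with h1 | h1 | h1
    · exact Or.inl h1
    · rw [h1, ltp_app] at h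
      exact Or.inr ⟨h1, ih hv.2 (Or.inr h)⟩
    · exfalso
      rcases fin3 (w 0) with h2 | h2 | h2
      · rw [h2] at h h1
        rcases fin3 a with rfl | rfl | rfl
        · exact absurd h1 (by decide)
        · rcases h with h | h
          · exact absurd h (by simp [blk0, app, cns])
          · exact absurd h.1 (by simp [blk0, app, cns])
        · rcases h with h | h
          · exact absurd h (by simp [blk0, app, cns])
          · exact absurd h.1 (by simp [blk0, app, cns])
      · have : a = 2 := by
          rw [h2] at h1
          rcases fin3 a with rfl | rfl | rfl
          · exact absurd h1 (by decide)
          · exact absurd h1 (by decide)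
          · rfl
        subst this
        rw [h2, blk12, app_append, ltp_app] at h
        obtain ⟨l', hl'⟩ := ltp_zeros (k := 1) h
        obtain ⟨τ', hτ', _⟩ := Xt_head0 (l := l') hl'
        exact hv.1 rfl (by rw [hτ']; rfl)
      · rw [h2] at h1
        revert h1; rcases fin3 a with rfl | rfl | rfl <;> decide

/-- decrement the last 2 -/
def dec2 : List (Fin 3) → List (Fin 3)
  | [] => []
  | a :: l => if 2 ∈ l then a :: dec2 l else 1 :: l

theorem cnt_dec2 (n : ℕ) {l : List (Fin 3)} (h : 2 ∈ l) :
    A n (cnt (dec2 l)) = A n (cnt l) + ev 0 := by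
  induction l with
  | nil => simp at h
  | cons a l ih =>
    unfold dec2
    split_ifs with hl
    · simp only [cnt, map_add, ih hl]; abel
    · obtain rfl : a = 2 := by simpa [hl, eq_comm] using h
      have : A n (ev 1) = A n (ev 2) + ev 0 := by
        ext i; fin_cases i <;> simp [ev, A_apply]
      simp only [cnt, map_add, this]; abel

theorem good_no2 {w : Seq3} (hw : w 0 = 2) {l : List (Fin 3)} (h : 2 ∉ l) : good w l := by
  induction l with
  | nil => trivial
  | cons a l ih =>
    simp only [List.mem_cons, not_or] at h
    refine ⟨Or.inl ?_, ih h.2⟩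
    rw [hw]
    rcases fin3 a with rfl | rfl | rfl
    · decide
    · decide
    · exact (h.1 rfl).elim

theorem ltp_dec2 {l : List (Fin 3)} {w : Seq3} (h : lep l w) (h2 : 2 ∈ l) : ltp (dec2 l) w := by
  induction l generalizing w with
  | nil => simp at h2
  | cons a l ih =>
    unfold dec2
    split_ifs with hl
    · rcases h with h | h
      · exact Or.inl h
      · exact Or.inr ⟨h.1, ih h.2 hl⟩
    · obtain rfl : a = 2 := by simpa [hl, eq_comm] using h2
      left
      rcases h with h | h
      · exact lt_trans (by decide) h
      · rw [← h.1]; decide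

theorem good_dec2 {w : Seq3} (hw : w 0 = 2) {l : List (Fin 3)} (h : wgood w l) (h2 : 2 ∈ l) :
    good w (dec2 l) := by
  induction l with
  | nil => trivial
  | cons a l ih =>
    have := ltp_dec2 h.1 h2
    unfold dec2 at this ⊢
    split_ifs with hl
    · rw [if_pos hl] at this
      exact ⟨this, ih h.2 hl⟩
    · rw [if_neg hl] at this
      exact ⟨this, good_no2 hw hl⟩

theorem wgood_of {w : Seq3} {x : List (Fin 3)} (h : ∀ p q, x = p ++ q → lep q w) : wgood w x := by
  induction x with
  | nil => trivial
  | cons a x ih =>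
    refine ⟨h [] _ rfl, ih fun p q hpq => h (a :: p) q (by rw [hpq]; rfl)⟩

theorem parse_bound {n : ℕ} {w : Seq3} (hw : w 0 = 2) (g : (Fin 3 → ℝ) →ₗ[ℝ] ℝ)
    (h0 : 0 ≤ g (ev 0)) (hg : ∀ t, good w t → 0 ≤ g (A n (cnt t)))
    (τ : List (Option (Fin 3))) (x : List (Fin 3))
    (hC : ∀ ρ y r, x.map some ++ τ = ρ ++ (y.map some ++ r) → lep y w) :
    0 ≤ g (A n (cnt x)) + g (cnt (Xt n τ)) + g (ev 0) := by
  have hblock : 0 ≤ g (A n (cnt x)) + g (ev 0) := by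
    by_cases h2 : 2 ∈ x
    · have hx : wgood w x := by
        apply wgood_of
        intro p q hpq
        exact hC (p.map some) q τ (by rw [hpq]; simp)
      have := hg _ (good_dec2 hw hx h2)
      rwa [cnt_dec2 n h2, map_add] at this
    · have := hg _ (good_no2 hw h2)
      linarith
  induction τ generalizing x with
  | nil => simpa [Xt, cnt] using hblock
  | cons a τ ih =>
    cases a with
    | none =>
      have := ih [] (fun ρ y r h => hC (x.map some ++ none :: ρ) y r (by
        simp only [List.map_nil, List.nil_append] at h; rw [h]; simp)) (by simpa [cnt] using h0)
      simp only [Xt, cnt, map_add] at this ⊢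
      simp at this
      linarith
    | some a =>
      have hC' : ∀ ρ y r, (x ++ [a]).map some ++ τ = ρ ++ (y.map some ++ r) → lep y w := 
        fun ρ y r h => hC ρ y r (by rw [← h]; simp)
      have := ih (x ++ [a]) hC' (by
        by_cases h2 : 2 ∈ x ++ [a]
        · have hx : wgood w (x ++ [a]) := by
            apply wgood_of
            intro p q hpq
            exact hC' (p.map some) q τ (by rw [hpq]; simp)
          have := hg _ (good_dec2 hw hx h2)
          rwa [cnt_dec2 n h2, map_add] at this
        · have := hg _ (good_no2 hw h2)
          linarith)
      simp only [Xt, cnt_append, cnt, map_add, cnt_blk, add_zero] at this ⊢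
      linarith

theorem sub_bound {n : ℕ} {w : Seq3} (hw : w 0 = 2) (g : (Fin 3 → ℝ) →ₗ[ℝ] ℝ)
    (h0 : 0 ≤ g (ev 0)) (hg : ∀ t, good w t → 0 ≤ g (A n (cnt t)))
    {W : List (Fin 3)} (hW : good (sub n w) W) : 0 ≤ g (cnt W) := by
  have key : ∀ W, good (sub n w) W → 0 ≤ g (cnt W) + g (ev 0) := by
    intro W hW
    obtain ⟨τ, hτ, hv⟩ := exists_parse hw hW
    have := parse_bound hw g h0 hg τ [] (by
      intro ρ y r h
      simp only [List.map_nil, List.nil_append] at h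
      subst h
      refine lep_of_parse (n := n) (τ := r) (vld_right hv) ?_
      by_cases hy : y = []
      · exact Or.inl hy
      · right
        rw [← hτ, Xt_append] at hW
        refine (good_right hW).ltp ?_
        cases y with
        | nil => exact (hy rfl).elim
        | cons a y =>
          have := blk_length n a
          simp only [List.map_cons, List.cons_append, Xt]
          intro h
          rw [← List.length_eq_zero_iff, List.length_append] at h
          omega)
    rw [hτ] at this
    simpa [cnt] using this
  by_contra hneg
  push Not at hneg
  obtain ⟨k, hk⟩ := exists_nat_gt (g (ev 0) / (- g (cnt W)))
  have := key _ (good_rep hW k)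
  rw [cnt_rep, map_smul, smul_eq_mul] at this
  rw [div_lt_iff₀ (by linarith)] at hk
  linarith

theorem bound_wp (u : List ℕ) (g : (Fin 3 → ℝ) →ₗ[ℝ] ℝ)
    (h0 : ∀ i ≤ u.length, 0 ≤ g (AL (u.take i) (ev 0)))
    (h1 : 0 ≤ g (AL u (ev 1))) (h2 : 0 ≤ g (AL u (ev 2)))
    {W : List (Fin 3)} (hW : good (wp u) W) : 0 ≤ g (cnt W) := by
  induction u generalizing g W with
  | nil =>
    clear hW
    induction W with
    | nil => simp [cnt]
    | cons a l ih =>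
      rw [cnt, map_add]
      refine add_nonneg ?_ ih
      rcases fin3 a with rfl | rfl | rfl
      · exact h0 0 (by simp)
      · exact h1
      · exact h2
  | cons n u ih =>
    refine sub_bound (w := wp u) (wp0 u) g (h0 0 (by simp)) ?_ hW
    intro t ht
    refine ih (g ∘ₗ A n) ?_ h1 h2 ht
    intro i hi
    exact h0 (i+1) (by simpa using hi)

theorem bound_wm (u : List ℕ) (g : (Fin 3 → ℝ) →ₗ[ℝ] ℝ)
    (h0 : ∀ i ≤ u.length, 0 ≤ g (AL (u.take i) (ev 0)))
    (h1 : 0 ≤ g (AL u (ev 1)))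
    {W : List (Fin 3)} (hW : good (wm u) W) : 0 ≤ g (cnt W) := by
  induction u generalizing g W with
  | nil =>
    induction W with
    | nil => simp [cnt]
    | cons a l ih =>
      rw [cnt, map_add]
      refine add_nonneg ?_ (ih hW.2)
      rcases fin3 a with rfl | rfl | rfl
      · exact h0 0 (by simp)
      · exact h1
      · exfalso
        have h3 : ltp l zs := by
          rcases hW.1 with h | h
          · exact absurd h (lt_irrefl _)
          · exact h.2
        clear ih hW
        induction l with
        | nil => exact h3
        | cons b l ih =>
          rcases h3 with h | h
          · exact absurd h (Fin.not_lt_zero _)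
          · exact ih h.2
  | cons n u ih =>
    refine sub_bound (w := wm u) (wm0 u) g (h0 0 (by simp)) ?_ hW
    intro t ht
    refine ih (g ∘ₗ A n) ?_ h1 ht
    intro i hi
    exact h0 (i+1) (by simpa using hi)


/-! ## Geometry of words -/

noncomputable def nrm (x : Fin 3 → ℝ) : Fin 3 → ℝ := (sg x)⁻¹ • x

theorem sg_nrm {x : Fin 3 → ℝ} (h : 0 < sg x) : sg (nrm x) = 1 := by
  rw [nrm, map_smul, smul_eq_mul, inv_mul_cancel₀ h.ne']

theorem A_nonneg (n : ℕ) {x : Fin 3 → ℝ} (h : 0 ≤ x) : 0 ≤ A n x := by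
  have h0 := h 0; have h1 := h 1; have h2 := h 2
  simp only [Pi.zero_apply] at h0 h1 h2
  intro i; fin_cases i
  · show 0 ≤ A n x 0; rw [A0]; positivity
  · exact h0
  · exact add_nonneg h1 h2

theorem sg_A (n : ℕ) {x : Fin 3 → ℝ} (h : 0 ≤ x) : sg x ≤ sg (A n x) := by
  have h1 : 0 ≤ x 1 := h 1
  have h2 : 0 ≤ x 2 := h 2
  rw [sg_apply, sg_apply, A0, A1, A2]
  have : 0 ≤ (n:ℝ) * x 1 + n * x 2 := by positivity
  nlinarith

theorem AL_nonneg (u : List ℕ) {x : Fin 3 → ℝ} (h : 0 ≤ x) : 0 ≤ AL u x := by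
  induction u with
  | nil => exact h
  | cons n u ih => exact A_nonneg n ih

theorem sg_AL (u : List ℕ) {x : Fin 3 → ℝ} (h : 0 ≤ x) : sg x ≤ sg (AL u x) := by
  induction u with
  | nil => exact le_rfl
  | cons n u ih => exact ih.trans (sg_A n (AL_nonneg u h))

theorem ev_nonneg (a : Fin 3) : 0 ≤ ev a := by
  intro i; simp only [ev, Pi.zero_apply]; split_ifs <;> norm_num

theorem sg_AL_ev (u : List ℕ) (a : Fin 3) : 1 ≤ sg (AL u (ev a)) := by
  rw [← sg_ev a]; exact sg_AL u (ev_nonneg a)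

theorem sg_AL_ev_pos (u : List ℕ) (a : Fin 3) : 0 < sg (AL u (ev a)) :=
  lt_of_lt_of_le one_pos (sg_AL_ev u a)

/-- corner points -/
noncomputable def cp (u : List ℕ) (a : Fin 3) : Fin 3 → ℝ := nrm (AL u (ev a))

theorem nrm_cnt_mem {w : Seq3} (_hw : w 0 = 2) {l : List (Fin 3)} (h : good w l) (hl : l ≠ []) :
    nrm (cnt l) ∈ DF w := by
  apply Fr_sub_DF
  refine ⟨l, h, hl, ?_⟩
  rw [nrm, sg_cnt]; rfl

theorem subLs_ne (u : List ℕ) {l : List (Fin 3)} (h : l ≠ []) : subLs u l ≠ [] := by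
  induction u with
  | nil => exact h
  | cons n u ih =>
    intro h'
    have := subL_length n (subLs u l)
    rw [subLs] at h'
    rw [h'] at this
    exact ih (List.length_eq_zero_iff.1 (by simpa using this))

theorem cp0_mem (u v : List ℕ) : cp u 0 ∈ DF (wm (u ++ v)) := by
  have h : good (subs v w20) [0] := good_no2 (wm0 v) (by decide)
  have h2 := nrm_cnt_mem (wm0 (u ++ v)) (l := subLs u [0]) (by
    rw [wm, subs_append]; exact good_subLs u (wm0 v) h) (subLs_ne u (by simp))
  rw [cnt_subLs] at h2
  simpa [cnt, cp] using h2

theorem cp1_mem (u : List ℕ) : cp u 1 ∈ DF (wm u) := by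
  have h : good w20 [1] := good_no2 rfl (by decide)
  have h2 := nrm_cnt_mem (wm0 u) (l := subLs u [1]) (good_subLs u rfl h) (subLs_ne u (by simp))
  rw [cnt_subLs] at h2
  simpa [cnt, cp] using h2

theorem continuousAt_nrm {x : Fin 3 → ℝ} (h : sg x ≠ 0) : ContinuousAt nrm x := by
  unfold nrm
  have : Continuous sg := sg.continuous_of_finiteDimensional
  exact (this.continuousAt.inv₀ h).smul continuousAt_id

theorem nrm_smul {c : ℝ} (hc : c ≠ 0) (x : Fin 3 → ℝ) : nrm (c • x) = nrm x := by
  rw [nrm, nrm, map_smul, smul_eq_mul, mul_inv, smul_smul]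
  congr 1
  field_simp

theorem good_22 (k : ℕ) : good w22 (List.replicate k 2 ++ [1]) := by
  have : ∀ k, ltp (List.replicate k 2 ++ [1]) w22 := by
    intro k
    induction k with
    | zero => left; decide
    | succ k ih => exact Or.inr ⟨rfl, ih⟩
  induction k with
  | zero => exact ⟨this 0, trivial⟩
  | succ k ih => exact ⟨this (k+1), ih⟩

theorem cnt_replicate (n : ℕ) (a : Fin 3) : cnt (List.replicate n a) = (n : ℝ) • ev a := by
  induction n with
  | zero => simp [cnt]
  | succ n ih => simp [List.replicate_succ, cnt, ih, add_smul, add_comm]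

theorem tendsto_inv_smul (x : Fin 3 → ℝ) (y : Fin 3 → ℝ) :
    Tendsto (fun k : ℕ => x + ((k:ℝ)+1)⁻¹ • y) atTop (𝓝 x) := by
  have h := (tendsto_one_div_add_atTop_nhds_zero_nat (𝕜 := ℝ)).smul_const y
  simp only [one_div, zero_smul] at h
  simpa using tendsto_const_nhds.add h

theorem cp2_mem (u : List ℕ) : cp u 2 ∈ DF (wp u) := by
  have hlim := tendsto_inv_smul (AL u (ev 2)) (AL u (ev 1))
  have h := (continuousAt_nrm (sg_AL_ev_pos u 2).ne').tendsto.comp hlim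
  refine (isClosed_DF (wp0 u)).mem_of_tendsto h (Eventually.of_forall fun k => ?_)
  have h2 := nrm_cnt_mem (wp0 u) (good_subLs u rfl (good_22 (k+1))) (subLs_ne u (by simp))
  rw [cnt_subLs, cnt_append, cnt_replicate] at h2
  have e : AL u (((k+1:ℕ):ℝ) • ev 2 + cnt [1]) =
      ((k:ℝ)+1) • (AL u (ev 2) + ((k:ℝ)+1)⁻¹ • AL u (ev 1)) := by
    have : (k:ℝ)+1 ≠ 0 := by positivity
    simp only [cnt, add_zero, map_add, map_smul, smul_add, smul_smul, mul_inv_cancel₀ this,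
      one_smul, Nat.cast_add, Nat.cast_one]
  rw [e, nrm_smul (by positivity)] at h2
  exact h2

/-! functional -/
def fu (u : List ℕ) : (Fin 3 → ℝ) →ₗ[ℝ] ℝ := (LinearMap.proj 2 : (Fin 3 → ℝ) →ₗ[ℝ] ℝ) ∘ₗ BL u

theorem fu_apply (u x) : fu u x = BL u x 2 := rfl

theorem BL_sign (u : List ℕ) {x : Fin 3 → ℝ} (h0 : 0 ≤ x 0) (h1 : 0 ≤ x 1) (h2 : x 2 ≤ 0) :
    BL u x 2 ≤ 0 := by
  induction u generalizing x with
  | nil => exact h2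
  | cons n u ih =>
    rw [BL_cons]
    apply ih
    · exact h1
    · rw [B1]
      have : (n:ℝ) * x 2 ≤ 0 := mul_nonpos_of_nonneg_of_nonpos (by positivity) h2
      linarith
    · rw [B2]
      have : ((n:ℝ)+1) * x 2 ≤ 0 := mul_nonpos_of_nonneg_of_nonpos (by positivity) h2
      linarith

theorem fu_cone0 (u v : List ℕ) : fu (u ++ v) (AL u (ev 0)) ≤ 0 := by
  rw [fu_apply, BL_append, BLAL]
  apply BL_sign <;> simp [ev]

theorem fu_cone1 (u : List ℕ) : fu u (AL u (ev 1)) = 0 := by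
  rw [fu_apply, BLAL]; simp [ev]

theorem fu_cone2 (u : List ℕ) : fu u (AL u (ev 2)) = 1 := by
  rw [fu_apply, BLAL]; simp [ev]

theorem fu_DF (u : List ℕ) {x : Fin 3 → ℝ} (hx : x ∈ DF (wm u)) : fu u x ≤ 0 := by
  have := DF_nonneg (wm0 u) (-(fu u)) (fun l hl => bound_wm u (-(fu u)) ?_ ?_ hl) hx
  · simpa using this
  · intro i hi
    have := fu_cone0 (u.take i) (u.drop i)
    rw [List.take_append_drop] at this
    simpa using this
  · simp [fu_cone1]

theorem BL_int (u : List ℕ) (j : Fin 3) : ∃ m : Fin 3 → ℤ, ∀ x, BL u x j = ∑ i, (m i : ℝ) * x i := by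
  induction u generalizing j with
  | nil =>
    refine ⟨fun i => if i = j then 1 else 0, fun x => ?_⟩
    rw [BL_nil]; simp
  | cons n u ih =>
    obtain ⟨m, hm⟩ := ih j
    refine ⟨![m 1 - m 2, m 0, (n+1) * m 2 - n * m 1], fun x => ?_⟩
    rw [BL_cons, hm]
    simp only [Fin.sum_univ_three, B0, B1, B2]
    simp
    ring

theorem fu_int (u : List ℕ) : ∃ m : Fin 3 → ℤ, m ≠ 0 ∧ ∀ x, fu u x = ∑ i, (m i : ℝ) * x i := by
  obtain ⟨m, hm⟩ := BL_int u 2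
  refine ⟨m, ?_, hm⟩
  rintro rfl
  have := hm (AL u (ev 2))
  have h2 := fu_cone2 u
  rw [fu_apply, this] at h2
  simp at h2

/-! triangles -/
def T (u : List ℕ) : Set (Fin 3 → ℝ) := {x | sg x = 1 ∧ 0 ≤ BL u x}

theorem isClosed_T (u : List ℕ) : IsClosed (T u) := by
  refine (isClosed_eq sg.continuous_of_finiteDimensional continuous_const).inter ?_
  exact isClosed_le continuous_const (BL u).continuous_of_finiteDimensional

theorem T_append (u v : List ℕ) : T (u ++ v) ⊆ T u := by
  rintro x ⟨h1, h2⟩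
  refine ⟨h1, ?_⟩
  rw [← ALBL v (BL u x), ← BL_append]
  exact AL_nonneg v h2

theorem cp_T (u : List ℕ) (a : Fin 3) : cp u a ∈ T u := by
  refine ⟨sg_nrm (sg_AL_ev_pos u a), ?_⟩
  rw [cp, nrm, map_smul, BLAL]
  exact smul_nonneg (inv_nonneg.2 (sg_AL_ev_pos u a).le) (ev_nonneg a)

theorem AL_zeros (j : ℕ) (y : Fin 3 → ℝ) :
    AL (List.replicate (2*j) 0) y = ![y 0, y 1, j * (y 0 + y 1) + y 2] := by
  induction j with
  | zero => ext i; fin_cases i <;> simp [AL_nil]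
  | succ j ih =>
    rw [show 2 * (j+1) = 2*j + 1 + 1 by ring, List.replicate_succ, List.replicate_succ,
      AL_cons, AL_cons, ih]
    ext i; fin_cases i <;> simp [A_apply]
    ring

theorem ev_decomp (y : Fin 3 → ℝ) : y = y 0 • ev 0 + y 1 • ev 1 + y 2 • ev 2 := by
  ext i; fin_cases i <;> simp [ev]

theorem T_zeros (u : List ℕ) {ε : ℝ} (hε : 0 < ε) :
    ∃ j : ℕ, ∀ x ∈ T (u ++ List.replicate (2*j) 0), dist x (cp u 2) < ε := by
  set q := cp u 2 with hq
  set b0 := AL u (ev 0) - sg (AL u (ev 0)) • q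
  set b1 := AL u (ev 1) - sg (AL u (ev 1)) • q
  obtain ⟨j, hj⟩ := exists_nat_gt ((‖b0‖ + ‖b1‖) / ε)
  have hj0 : (0:ℝ) < j := lt_of_le_of_lt (by positivity) hj
  refine ⟨j, ?_⟩
  rintro x ⟨hx1, hx2⟩
  set y' := BL (u ++ List.replicate (2*j) 0) x with hy'
  set y := BL u x with hy
  have hyy : y = ![y' 0, y' 1, j * (y' 0 + y' 1) + y' 2] := by
    rw [← AL_zeros, hy', BL_append, ALBL]
  have h0 : 0 ≤ y' 0 := hx2 0
  have h1 : 0 ≤ y' 1 := hx2 1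
  have h2 : 0 ≤ y' 2 := hx2 2
  have e0 : y 0 = y' 0 := by rw [hyy]; rfl
  have e1 : y 1 = y' 1 := by rw [hyy]; rfl
  have e2 : y 2 = j * (y' 0 + y' 1) + y' 2 := by rw [hyy]; rfl
  have hxd : x = y 0 • AL u (ev 0) + y 1 • AL u (ev 1) + y 2 • AL u (ev 2) := by
    conv_lhs => rw [← ALBL u x, ← hy, ev_decomp y]
    simp only [map_add, map_smul]
  have hc := sg_AL_ev u 2
  have hc0 := sg_AL_ev u 0
  have hc1 := sg_AL_ev u 1
  have hqq : AL u (ev 2) = sg (AL u (ev 2)) • q := by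
    rw [hq, cp, nrm, smul_smul, mul_inv_cancel₀ (by linarith), one_smul]
  have hs : y 0 * sg (AL u (ev 0)) + y 1 * sg (AL u (ev 1)) + y 2 * sg (AL u (ev 2)) = 1 := by
    rw [← hx1]
    conv_rhs => rw [hxd]
    simp only [map_add, map_smul, smul_eq_mul]
  have hxq : x - q = y 0 • b0 + y 1 • b1 := by
    have : x - q = x - (y 0 * sg (AL u (ev 0)) + y 1 * sg (AL u (ev 1)) + y 2 * sg (AL u (ev 2))) • q := by
      rw [hs, one_smul]
    rw [this]
    conv_lhs => enter [1]; rw [hxd, hqq]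
    simp only [b0, b1]
    module
  have hle : j * (y' 0 + y' 1) ≤ 1 := by
    have a0 : 0 ≤ y 0 * sg (AL u (ev 0)) := by rw [e0]; positivity
    have a1 : 0 ≤ y 1 * sg (AL u (ev 1)) := by rw [e1]; positivity
    have a2 : 0 ≤ y 2 := by rw [e2]; positivity
    have a3 : y 2 ≤ 1 := by nlinarith
    linarith
  rw [dist_eq_norm, hxq, e0, e1]
  calc ‖y' 0 • b0 + y' 1 • b1‖ ≤ y' 0 * ‖b0‖ + y' 1 * ‖b1‖ := by
        refine (norm_add_le _ _).trans ?_
        rw [norm_smul, norm_smul, Real.norm_of_nonneg h0, Real.norm_of_nonneg h1]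
    _ ≤ (y' 0 + y' 1) * (‖b0‖ + ‖b1‖) := by
        nlinarith [mul_nonneg h0 (norm_nonneg b1), mul_nonneg h1 (norm_nonneg b0)]
    _ < ε := by
        rw [div_lt_iff₀ hε] at hj
        by_contra hcon
        push Not at hcon
        have hS : 0 ≤ y' 0 + y' 1 := by positivity
        rcases hS.eq_or_lt with h | h
        · rw [← h] at hcon; linarith
        · have := mul_lt_mul_of_pos_left hj h
          nlinarith

theorem T_zeros_nhds (u : List ℕ) {O : Set (Fin 3 → ℝ)} (hO : O ∈ 𝓝 (cp u 2)) :
    ∃ v, T (u ++ v) ⊆ O := by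
  obtain ⟨ε, hε, h⟩ := Metric.mem_nhds_iff.1 hO
  obtain ⟨j, hj⟩ := T_zeros u hε
  exact ⟨_, fun x hx => h (hj x hx)⟩

/-! extendable properties -/
def Len (k : ℕ) (u : List ℕ) : Prop := k ≤ u.length
def Diam (k : ℕ) (u : List ℕ) : Prop := ∀ x ∈ T u, ∀ y ∈ T u, dist x y ≤ ((k:ℝ)+1)⁻¹
def Irr (m : Fin 3 → ℤ) (u : List ℕ) : Prop := m ≠ 0 → ∀ x ∈ T u, ∑ i, (m i : ℝ) * x i ≠ 0
noncomputable def unt (x : Fin 3 → ℝ) : Fin 3 → ℝ := ‖x‖⁻¹ • x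
def Smo (k : ℕ) (u : List ℕ) : Prop := ∃ u1, u1 <+: u ∧
  ∀ x ∈ T u, ‖unt (cp u1 0 - x) + unt (cp u1 1 - x)‖ ≤ ((k:ℝ)+1)⁻¹

theorem ext_Len (k : ℕ) (u : List ℕ) : ∃ v, Len k (u ++ v) :=
  ⟨List.replicate k 0, by simp [Len]⟩

theorem ext_Diam (k : ℕ) (u : List ℕ) : ∃ v, Diam k (u ++ v) := by
  have hk : (0:ℝ) < ((k:ℝ)+1)⁻¹ := by positivity
  obtain ⟨v, hv⟩ := T_zeros_nhds u (Metric.ball_mem_nhds _ (half_pos hk))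
  refine ⟨v, fun x hx y hy => ?_⟩
  have h1 := Metric.mem_ball.1 (hv hx)
  have h2 := Metric.mem_ball'.1 (hv hy)
  have := dist_triangle x (cp u 2) y
  linarith

theorem ext_Irr (m : Fin 3 → ℤ) (u : List ℕ) : ∃ v, Irr m (u ++ v) := by
  by_cases hm : m = 0
  · exact ⟨[], fun h => absurd hm h⟩
  let M : (Fin 3 → ℝ) →ₗ[ℝ] ℝ := ∑ i, (m i : ℝ) • LinearMap.proj i
  have hM : ∀ x, M x = ∑ i, (m i : ℝ) * x i := fun x => by simp [M]
  have step : ∀ u', M (AL u' (ev 2)) ≠ 0 → ∃ v, Irr m (u' ++ v) := by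
    intro u' h
    have hq : M (cp u' 2) ≠ 0 := by
      rw [cp, nrm, map_smul, smul_eq_mul]
      exact mul_ne_zero (inv_ne_zero (sg_AL_ev_pos u' 2).ne') h
    have hc : Continuous M := M.continuous_of_finiteDimensional
    obtain ⟨v, hv⟩ := T_zeros_nhds u' ((isOpen_ne.preimage hc).mem_nhds hq)
    refine ⟨v, fun _ x hx => ?_⟩
    rw [← hM]; exact hv hx
  by_cases h2 : M (AL u (ev 2)) = 0
  · by_cases h0 : M (AL u (ev 0)) = 0
    · have h1 : M (AL u (ev 1)) ≠ 0 := by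
        intro h1
        have hz : ∀ x, M x = 0 := by
          intro x
          rw [← ALBL u x, ev_decomp (BL u x)]
          simp [h0, h1, h2]
        apply hm
        funext i
        have := hz (ev i)
        rw [hM] at this
        simp only [ev, mul_ite, mul_one, mul_zero, Finset.sum_ite_eq', Finset.mem_univ, if_true] at this
        exact_mod_cast this
      have e : AL [1,1] (ev 2) = ev 0 + ev 1 + ev 2 := by
        ext i; fin_cases i <;> simp [AL_cons, AL_nil, A_apply, ev]
      obtain ⟨v, hv⟩ := step (u ++ [1,1]) (by
        rw [AL_append, e]; simp only [map_add, h0, h2]; simpa using h1)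
      exact ⟨[1,1] ++ v, by rwa [← List.append_assoc]⟩
    · have e : AL [1] (ev 2) = ev 0 + ev 2 := by
        ext i; fin_cases i <;> simp [AL_cons, AL_nil, A_apply, ev]
      obtain ⟨v, hv⟩ := step (u ++ [1]) (by
        rw [AL_append, e]; simp only [map_add, h2]; simpa using h0)
      exact ⟨[1] ++ v, by rwa [← List.append_assoc]⟩
  · exact step u h2

theorem ext_Smo (k : ℕ) (u : List ℕ) : ∃ v, Smo k (u ++ v) := by
  have hk : (0:ℝ) < ((k:ℝ)+1)⁻¹ := by positivity
  set a := AL u (ev 0) with ha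
  set b := AL u (ev 1) with hb
  have sa : 0 < sg a := sg_AL_ev_pos u 0
  have sb : 0 < sg b := sg_AL_ev_pos u 1
  have hpa : cp u 0 = (sg a)⁻¹ • a := rfl
  have hpb : cp u 1 = (sg b)⁻¹ • b := rfl
  have hab : cp u 0 ≠ cp u 1 := by
    intro h
    have := congrArg (fun x => BL u x 0) h
    simp only [hpa, hpb, map_smul, ha, hb, BLAL] at this
    simp [ev] at this
    exact sa.ne' this
  set v0 := nrm (a + b) with hv0
  have sab : 0 < sg (a + b) := by rw [map_add]; positivity
  have hv0' : v0 = (sg a / (sg a + sg b)) • cp u 0 + (sg b / (sg a + sg b)) • cp u 1 := by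
    rw [hv0, nrm, hpa, hpb, map_add, smul_smul, smul_smul, smul_add]
    congr 2 <;> field_simp
  have d0 : cp u 0 - v0 = (sg b / (sg a + sg b)) • (cp u 0 - cp u 1) := by
    rw [hv0']
    have : cp u 0 = (sg a / (sg a + sg b)) • cp u 0 + (sg b / (sg a + sg b)) • cp u 0 := by
      rw [← add_smul, ← add_div, div_self (by positivity), one_smul]
    conv_lhs => enter [1]; rw [this]
    module
  have d1 : cp u 1 - v0 = (sg a / (sg a + sg b)) • (cp u 1 - cp u 0) := by
    rw [hv0']
    have : cp u 1 = (sg a / (sg a + sg b)) • cp u 1 + (sg b / (sg a + sg b)) • cp u 1 := by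
      rw [← add_smul, ← add_div, div_self (by positivity), one_smul]
    conv_lhs => enter [1]; rw [this]
    module
  have unt_smul : ∀ (c : ℝ) (x : Fin 3 → ℝ), 0 < c → unt (c • x) = unt x := by
    intro c x hc
    rw [unt, unt, norm_smul, Real.norm_of_nonneg hc.le, smul_smul]
    congr 1
    field_simp
  have unt_neg : ∀ x : Fin 3 → ℝ, unt (-x) = - unt x := by
    intro x; rw [unt, unt, norm_neg, smul_neg]
  let Φ : (Fin 3 → ℝ) → ℝ := fun x => ‖unt (cp u 0 - x) + unt (cp u 1 - x)‖
  have hΦ0 : Φ v0 = 0 := by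
    simp only [Φ]
    rw [d0, d1, unt_smul _ _ (by positivity), unt_smul _ _ (by positivity), ← neg_sub (cp u 1),
      unt_neg, neg_add_cancel, norm_zero]
  have n0 : cp u 0 - v0 ≠ 0 := by
    rw [d0]; exact smul_ne_zero (by positivity) (sub_ne_zero.2 hab)
  have n1 : cp u 1 - v0 ≠ 0 := by
    rw [d1]; exact smul_ne_zero (by positivity) (sub_ne_zero.2 hab.symm)
  have hcont : ContinuousAt Φ v0 := by
    simp only [Φ, unt]
    refine ContinuousAt.norm (ContinuousAt.add ?_ ?_)
    · have hc : ContinuousAt (fun x => cp u 0 - x) v0 := by fun_prop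
      exact (hc.norm.inv₀ (norm_ne_zero_iff.2 n0)).smul hc
    · have hc : ContinuousAt (fun x => cp u 1 - x) v0 := by fun_prop
      exact (hc.norm.inv₀ (norm_ne_zero_iff.2 n1)).smul hc
  have hO : {x | Φ x < ((k:ℝ)+1)⁻¹} ∈ 𝓝 v0 := by
    apply hcont.eventually_lt continuousAt_const
    rw [hΦ0]; exact hk
  have hlim : Tendsto (fun N : ℕ => cp (u ++ [N+1, N+1]) 2) atTop (𝓝 v0) := by
    have h1 := tendsto_inv_smul (a + b) (AL u (ev 2))
    have h2 := (continuousAt_nrm sab.ne').tendsto.comp h1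
    refine h2.congr fun N => ?_
    have e : AL [N+1,N+1] (ev 2) = ((N:ℝ)+1) • (ev 0 + ev 1 + ((N:ℝ)+1)⁻¹ • ev 2) := by
      have : (N:ℝ)+1 ≠ 0 := by positivity
      ext i; fin_cases i <;> simp [AL_cons, AL_nil, A_apply, ev, this]
    simp only [Function.comp]
    rw [cp, AL_append, e, map_smul, nrm_smul (by positivity)]
    simp only [map_add, map_smul, ha, hb]
  have hev := hlim.eventually (eventually_mem_nhds_iff.2 hO)
  obtain ⟨N, hN⟩ := hev.exists
  obtain ⟨v, hv⟩ := T_zeros_nhds _ hN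
  refine ⟨[N+1,N+1] ++ v, u, by simp, fun x hx => ?_⟩
  rw [← List.append_assoc] at hx
  exact (hv hx).le

def fam (k : ℕ) (m : Fin 3 → ℤ) (u : List ℕ) : Prop := Len k u ∧ Diam k u ∧ Smo k u ∧ Irr m u

theorem ext_fam (k : ℕ) (m : Fin 3 → ℤ) (u : List ℕ) : ∃ v, fam k m (u ++ v) := by
  obtain ⟨v1, h1⟩ := ext_Len k u
  obtain ⟨v2, h2⟩ := ext_Diam k (u ++ v1)
  obtain ⟨v3, h3⟩ := ext_Smo k (u ++ v1 ++ v2)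
  obtain ⟨v4, h4⟩ := ext_Irr m (u ++ v1 ++ v2 ++ v3)
  refine ⟨v1 ++ v2 ++ v3 ++ v4, ?_⟩
  have e : u ++ (v1 ++ v2 ++ v3 ++ v4) = u ++ v1 ++ v2 ++ v3 ++ v4 := by simp
  rw [e]
  refine ⟨?_, ?_, ?_, h4⟩
  · simp only [Len, List.length_append] at h1 ⊢; omega
  · intro x hx y hy
    exact h2 x (T_append _ _ (T_append _ _ hx)) y (T_append _ _ (T_append _ _ hy))
  · obtain ⟨u1, hu1, h⟩ := h3
    exact ⟨u1, hu1.trans (List.prefix_append _ _), fun x hx => h x (T_append _ _ hx)⟩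


/-! ## Topology of the space of digit frequency sets -/

noncomputable def FF (w : {w : Seq3 // w ∈ MaxSet}) : TopologicalSpace.NonemptyCompacts (Fin 3 → ℝ) :=
  ⟨⟨DF w.1, isCompact_DF w.2.1⟩, ⟨ev 0, ev_mem_DF w.2.1⟩⟩

theorem FF_coe (w : {w : Seq3 // w ∈ MaxSet}) : (FF w : Set (Fin 3 → ℝ)) = DF w.1 := rfl

theorem dist_FF {M : ℕ} (hM : 1 ≤ M) {w w' : {w : Seq3 // w ∈ MaxSet}} (h : agr M w.1 w'.1) :
    dist (FF w) (FF w') ≤ (M:ℝ)⁻¹ := by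
  rw [Metric.NonemptyCompacts.dist_eq]
  refine Metric.hausdorffDist_le_of_infDist (by positivity) ?_ ?_
  · intro x hx; exact DF_infDist w'.2.1 hM h hx
  · intro x hx; exact DF_infDist w.2.1 hM h.symm hx

theorem exists_inv_lt {ε : ℝ} (hε : 0 < ε) : ∃ M : ℕ, 1 ≤ M ∧ (M:ℝ)⁻¹ < ε := by
  obtain ⟨n, hn⟩ := exists_nat_one_div_lt hε
  exact ⟨n+1, by omega, by simpa using hn⟩

theorem continuous_FF : Continuous FF := by
  rw [continuous_iff_continuousAt]
  intro w
  rw [ContinuousAt, Metric.tendsto_nhds]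
  intro ε hε
  obtain ⟨M, hM, hlt⟩ := exists_inv_lt hε
  have : ∀ᶠ w' : {w : Seq3 // w ∈ MaxSet} in 𝓝 w, ∀ i ∈ Finset.range M, w'.1 i = w.1 i := by
    rw [Filter.eventually_all_finset]
    intro i _
    have hc : Continuous fun w' : {w : Seq3 // w ∈ MaxSet} => w'.1 i :=
      (continuous_apply i).comp continuous_subtype_val
    exact hc.continuousAt.eventually (IsOpen.mem_nhds (isOpen_discrete {w.1 i}) rfl)
  filter_upwards [this] with w' hw'
  exact (dist_FF hM fun i hi => hw' i (by simpa using hi)).trans_lt hlt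

theorem isClosed_MaxSet : IsClosed MaxSet := by
  have : MaxSet = {w | w 0 = 2} ∩ ⋂ r : ℕ, ⋂ n : ℕ,
      {w : Seq3 | (∀ i ∈ Finset.range n, w (r + i) = w i) → w (r + n) ≤ w n} := by
    ext w
    simp only [MaxSet, Set.mem_inter_iff, Set.mem_iInter, lexLe_iff, shift_iter]
    simp
  rw [this]
  refine (isClosed_eq (by fun_prop) (by fun_prop)).inter (isClosed_iInter fun r => isClosed_iInter fun n => ?_)
  apply isClosed_imp
  · have : {w : Seq3 | ∀ i ∈ Finset.range n, w (r + i) = w i} =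
      ⋂ i ∈ Finset.range n, {w : Seq3 | w (r + i) = w i} := by ext; simp
    rw [this]
    refine isOpen_biInter_finset fun i _ => ?_
    have hc : Continuous fun w : Seq3 => (w (r+i), w i) := by fun_prop
    exact (isOpen_discrete {p : Fin 3 × Fin 3 | p.1 = p.2}).preimage hc
  · have hc : Continuous fun w : Seq3 => (w (r+n), w n) := by fun_prop
    exact (isClosed_discrete {p : Fin 3 × Fin 3 | p.1 ≤ p.2}).preimage hc

theorem compact_range : CompactSpace (Set.range FF) := by
  have : CompactSpace {w : Seq3 // w ∈ MaxSet} :=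
    isCompact_iff_compactSpace.1 isClosed_MaxSet.isCompact
  exact isCompact_iff_compactSpace.1 (isCompact_range continuous_FF)

def UU (u : List ℕ) : Set (Set.range FF) :=
  {Λ | ¬ ((Λ : TopologicalSpace.NonemptyCompacts (Fin 3 → ℝ)) : Set (Fin 3 → ℝ)) ⊆ DF (wm u) ∧
    ¬ DF (wp u) ⊆ ((Λ : TopologicalSpace.NonemptyCompacts (Fin 3 → ℝ)) : Set (Fin 3 → ℝ))}

theorem isOpen_UU (u : List ℕ) : IsOpen (UU u) := by
  refine IsOpen.inter ?_ ?_
  · exact (TopologicalSpace.NonemptyCompacts.isClosed_subsets_of_isClosed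
      (isClosed_DF (wm0 u))).isOpen_compl.preimage continuous_subtype_val
  · have : {K : TopologicalSpace.NonemptyCompacts (Fin 3 → ℝ) | ¬ DF (wp u) ⊆ (K : Set (Fin 3 → ℝ))} =
      ⋃ x ∈ DF (wp u), {K : TopologicalSpace.NonemptyCompacts (Fin 3 → ℝ) |
        (K : Set (Fin 3 → ℝ)) ⊆ {x}ᶜ} := by
      ext K
      simp [Set.not_subset]
    have h2 : IsOpen {K : TopologicalSpace.NonemptyCompacts (Fin 3 → ℝ) |
        ¬ DF (wp u) ⊆ (K : Set (Fin 3 → ℝ))} := by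
      rw [this]
      exact isOpen_biUnion fun x _ =>
        TopologicalSpace.NonemptyCompacts.isOpen_subsets_of_isOpen isOpen_compl_singleton
    exact h2.preimage continuous_subtype_val

noncomputable def Fw (u : List ℕ) : Set.range FF := ⟨FF ⟨wm u, wm_mem u⟩, ⟨_, rfl⟩⟩

theorem fu_cp (u v : List ℕ) (a : Fin 3) : fu u (cp v a) = (sg (AL v (ev a)))⁻¹ * fu u (AL v (ev a)) := by
  rw [cp, nrm, map_smul, smul_eq_mul]

theorem Fw_mem_UU (u : List ℕ) : Fw (u ++ [0]) ∈ UU u := by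
  constructor
  · intro h
    have h1 := fu_DF u (h (cp1_mem (u ++ [0])))
    rw [fu_cp, fu_apply, AL_append, BLAL] at h1
    have : AL [0] (ev 1) 2 = 1 := by simp [AL_cons, AL_nil, A_apply, ev]
    rw [this, ← AL_append, mul_one] at h1
    exact absurd h1 (not_le.2 (inv_pos.2 (sg_AL_ev_pos _ _)))
  · intro h
    have h1 := fu_DF (u ++ [0]) (h (cp2_mem u))
    rw [fu_cp, fu_apply, BL_append, BLAL] at h1
    have : BL [0] (ev 2) 2 = 1 := by simp [BL_cons, BL_nil, B_apply, ev]
    rw [this, mul_one] at h1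
    exact absurd h1 (not_le.2 (inv_pos.2 (sg_AL_ev_pos _ _)))

def Inn (w : Seq3) (u : List ℕ) : Prop := lexLe (wm u) w ∧ lexLe w (wp u)

theorem Inn_of_UU {u : List ℕ} {Λ : Set.range FF} (h : Λ ∈ UU u) {w : Seq3}
    (hw : ((Λ : TopologicalSpace.NonemptyCompacts (Fin 3 → ℝ)) : Set (Fin 3 → ℝ)) = DF w) :
    Inn w u := by
  have h1 := h.1
  have h2 := h.2
  rw [hw] at h1 h2
  constructor
  · rcases lexLe_total (wm u) w with h | h
    · exact h
    · exact (h1 (DF_mono h)).elim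
  · rcases lexLe_total (wp u) w with h | h
    · exact (h2 (DF_mono h)).elim
    · exact h

theorem separate {D : Set (Fin 3 → ℝ)} (hc : IsClosed D) (hconv : Convex ℝ D)
    (hsg : ∀ x ∈ D, sg x = 1) {x : Fin 3 → ℝ} (hx : x ∉ D) (hx1 : sg x = 1) :
    ∃ g : (Fin 3 → ℝ) →ₗ[ℝ] ℝ, g x < 0 ∧ ∀ y ∈ D, 0 < g y := by
  obtain ⟨f, s, h1, h2⟩ := geometric_hahn_banach_point_closed hconv hc hx
  refine ⟨(f : (Fin 3 → ℝ) →ₗ[ℝ] ℝ) - s • sg, ?_, fun y hy => ?_⟩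
  · simp [hx1]; exact h1
  · simp [hsg y hy]; exact h2 y hy

theorem g_cone {g : (Fin 3 → ℝ) →ₗ[ℝ] ℝ} {u : List ℕ} {a : Fin 3} (h : 0 ≤ g (cp u a)) :
    0 ≤ g (AL u (ev a)) := by
  rw [cp, nrm, map_smul, smul_eq_mul] at h
  exact nonneg_of_mul_nonneg_right h (inv_pos.2 (sg_AL_ev_pos u a))

theorem wm_le_wp (u : List ℕ) : lexLe (wm u) (wp u) := lexLe_subs u (le_w22 _)

theorem gap (u : List ℕ) (m : ℕ) : DF (wm (u ++ [m])) ⊆ DF (wp (u ++ [m+1])) := by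
  intro x hx
  by_contra hn
  obtain ⟨g, hg, hD⟩ := separate (isClosed_DF (wp0 _)) (convex_DF (wp0 _))
    (fun y hy => DF_sg (wp0 _) hy) hn (DF_sg (wm0 _) hx)
  have hmono := DF_mono (wm_le_wp (u ++ [m+1]))
  refine absurd (DF_nonneg (wm0 _) g (fun l hl => bound_wm _ g ?_ ?_ hl) hx) (not_le.2 hg)
  · intro i hi
    rcases Nat.lt_or_ge u.length i with h | h
    · have e : (u ++ [m]).take i = u ++ [m] := by
        apply List.take_of_length_le; simp; omega
      rw [e]
      have e2 : AL (u ++ [m]) (ev 0) = AL (u ++ [m+1]) (ev 0) := by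
        rw [AL_append, AL_append]
        congr 1
        ext i; fin_cases i <;> simp [AL_cons, AL_nil, A_apply, ev]
      rw [e2]
      apply g_cone
      have := cp0_mem (u ++ [m+1]) []
      rw [List.append_nil] at this
      exact (hD _ (hmono this)).le
    · rw [List.take_append_of_le_length h]
      apply g_cone
      have := cp0_mem (u.take i) (u.drop i ++ [m+1])
      rw [← List.append_assoc, List.take_append_drop] at this
      exact (hD _ (hmono this)).le
  · have e2 : AL (u ++ [m]) (ev 1) = AL (u ++ [m+1]) (ev 2) := by
      rw [AL_append, AL_append]
      congr 1
      ext i; fin_cases i <;> simp [AL_cons, AL_nil, A_apply, ev]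
    rw [e2]
    exact g_cone (hD _ (cp2_mem _)).le

theorem agr_wm (u : List ℕ) (M : ℕ) (v : List ℕ) : agr (M+1) (wm (u ++ M :: v)) (wm u) := by
  rw [wm, subs_append]
  exact agr_subs u (agr_sub_w20 M (wm0 v))

theorem approx_step (w : Seq3) (h2 : w 0 = 2) (M d : ℕ) :
    (∃ u, DF w = DF (wm u) ∨ agr M w (wm u)) ∨ ∃ u, u.length = d ∧ Inn w u := by
  induction d with
  | zero => exact Or.inr ⟨[], rfl, w20_le h2, le_w22 w⟩
  | succ d ih =>
    rcases ih with h | ⟨u, hd, h1, h3⟩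
    · exact Or.inl h
    rcases lexLe_total w (wm (u ++ [M])) with h | h
    · left
      exact ⟨u, Or.inr ((agr_sandwich h1 h ((agr_wm u M []).mono (by omega)).symm).symm)⟩
    · classical
      have hex : ∃ n, lexLe (wm (u ++ [n])) w := ⟨M, h⟩
      obtain ⟨n, hn, hmin⟩ : ∃ n, lexLe (wm (u ++ [n])) w ∧ ∀ k < n, ¬ lexLe (wm (u ++ [k])) w :=
        ⟨Nat.find hex, Nat.find_spec hex, fun k hk => Nat.find_min hex hk⟩
      cases n with
      | zero =>
        right
        refine ⟨u ++ [0], by simp [hd], hn, ?_⟩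
        have : sub 0 w22 = w22 := by
          have h0 : ∀ k, sub 0 w22 k = 2 := by
            intro k
            induction k with
            | zero => exact sub_zero_of_ne 0 (by decide)
            | succ k ih =>
              rw [sub_eq]
              exact ih
          funext k; exact h0 k
        rw [wp, subs_append]
        show lexLe w (subs u (sub 0 w22))
        rw [this]; exact h3
      | succ m =>
        have hle : lexLe w (wm (u ++ [m])) :=
          (lexLe_total w _).resolve_right (hmin m (by omega))
        rcases lexLe_total w (wp (u ++ [m+1])) with h' | h'
        · right
          exact ⟨u ++ [m+1], by simp [hd], hn, h'⟩
        · left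
          refine ⟨u ++ [m], Or.inl ?_⟩
          exact (DF_mono hle).antisymm ((gap u m).trans (DF_mono h'))

theorem approx (w : Seq3) (h2 : w 0 = 2) (M : ℕ) : ∃ u, DF w = DF (wm u) ∨ agr M w (wm u) := by
  rcases approx_step w h2 M (2*M) with h | ⟨u, hu, h1, h3⟩
  · exact h
  · exact ⟨u, Or.inr (agr_sandwich h1 h3 (agr_subs2 M u hu.ge _ _)).symm⟩

def VV (p : ℕ × (Fin 3 → ℤ)) : Set (Set.range FF) := ⋃ u, ⋃ (_ : fam p.1 p.2 u), UU u

theorem isOpen_VV (p) : IsOpen (VV p) :=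
  isOpen_iUnion fun u => isOpen_iUnion fun _ => isOpen_UU u

theorem dense_VV (p) : Dense (VV p) := by
  rw [Metric.dense_iff]
  rintro ⟨Λ, ⟨w, rfl⟩⟩ ε hε
  obtain ⟨M, hM, hlt⟩ := exists_inv_lt (half_pos hε)
  obtain ⟨u0, hu0⟩ := approx w.1 w.2.1 M
  have h1 : dist (FF ⟨wm u0, wm_mem u0⟩) (FF w) ≤ (M:ℝ)⁻¹ := by
    rcases hu0 with h | h
    · have : FF ⟨wm u0, wm_mem u0⟩ = FF w := by
        apply TopologicalSpace.NonemptyCompacts.ext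
        exact h.symm
      rw [this, dist_self]; positivity
    · exact dist_FF hM h.symm
  obtain ⟨v, hv⟩ := ext_fam p.1 p.2 (u0 ++ [M])
  refine ⟨Fw (u0 ++ [M] ++ v ++ [0]), ?_, ?_⟩
  · rw [Metric.mem_ball, Subtype.dist_eq]
    have h2 : dist (FF ⟨wm (u0 ++ [M] ++ v ++ [0]), wm_mem _⟩) (FF ⟨wm u0, wm_mem u0⟩) ≤ (M:ℝ)⁻¹ := by
      apply dist_FF hM
      have := (agr_wm u0 M (v ++ [0])).mono (by omega : M ≤ M+1)
      simpa using this
    have h3 := dist_triangle (FF ⟨wm (u0 ++ [M] ++ v ++ [0]), wm_mem _⟩) (FF ⟨wm u0, wm_mem u0⟩) (FF w)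
    refine lt_of_le_of_lt h3 ?_
    linarith
  · exact Set.mem_iUnion.2 ⟨_, Set.mem_iUnion.2 ⟨hv, Fw_mem_UU _⟩⟩

def GG : Set (Set.range FF) := ⋂ p, VV p

theorem dense_GG : Dense GG := by
  have := compact_range
  exact dense_iInter_of_isOpen isOpen_VV dense_VV

theorem isGδ_GG : IsGδ GG := IsGδ.iInter_of_isOpen isOpen_VV

/-! words of a sequence -/

theorem slt_sub_sub {n m : ℕ} (h : n < m) {s t : Seq3} (hs : s 0 = 2) (ht : t 0 = 2) :
    slt (sub m s) (sub n t) := by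
  obtain ⟨k, rfl⟩ := Nat.exists_eq_add_of_lt h
  rw [sub_eq, sub_eq n t, hs, ht]
  have : blk (n + k + 1) 2 = blk n 2 ++ 0 :: List.replicate k 0 := by
    rw [blk2, blk2, ← List.replicate_succ, List.cons_append, ← List.replicate_add]; rfl
  rw [this, app_append]
  apply slt_app
  apply slt_of_head
  exact Fin.pos_iff_ne_zero.2 (sub_zero_ne _ _)

theorem Inn_lt {w : Seq3} (c x y : List ℕ) {n m : ℕ} (h1 : Inn w (c ++ n :: x))
    (h2 : Inn w (c ++ m :: y)) : ¬ n < m := by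
  intro h
  have : slt (wp (c ++ m :: y)) (wm (c ++ n :: x)) := by
    rw [wp, wm, subs_append, subs_append]
    exact slt_subs c (slt_sub_sub h (wp0 y) (wm0 x))
  exact not_slt_of_le (lexLe_trans h1.1 h2.2) this

theorem Inn_unique {w : Seq3} (c x y : List ℕ) (hl : x.length = y.length) (h1 : Inn w (c ++ x))
    (h2 : Inn w (c ++ y)) : x = y := by
  induction x generalizing c y with
  | nil => exact (List.length_eq_zero_iff.1 hl.symm).symm
  | cons n x ih =>
    cases y with
    | nil => simp at hl
    | cons m y =>
      obtain rfl : n = m := le_antisymm (not_lt.1 (Inn_lt c y x h2 h1)) (not_lt.1 (Inn_lt c x y h1 h2))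
      rw [ih (c ++ [n]) y (by simpa using hl) (by simpa using h1) (by simpa using h2)]

theorem Inn_prefix {w : Seq3} {u v : List ℕ} (h : Inn w (u ++ v)) : Inn w u := by
  constructor
  · refine lexLe_trans ?_ h.1
    rw [wm, wm, subs_append]
    exact lexLe_subs u (w20_le (wm0 v))
  · refine lexLe_trans h.2 ?_
    rw [wp, wp, subs_append]
    exact lexLe_subs u (le_w22 _)


theorem lin_coord (g : (Fin 3 → ℝ) →ₗ[ℝ] ℝ) (x : Fin 3 → ℝ) : g x = ∑ i, g (ev i) * x i := by
  conv_lhs => rw [ev_decomp x]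
  simp [Fin.sum_univ_three]
  ring

theorem hull_range (z : Fin 4 → Fin 3 → ℝ) :
    convexHull ℝ (Set.range z) = (fun w : Fin 4 → ℝ => ∑ i, w i • z i) '' stdSimplex ℝ (Fin 4) := by
  have h := (Fintype.linearCombination ℝ z).image_convexHull
    (Set.range fun i j : Fin 4 => if i = j then (1:ℝ) else 0)
  rw [convexHull_basis_eq_stdSimplex] at h
  rw [← Set.range_comp] at h
  have e : (⇑(Fintype.linearCombination ℝ z) ∘ fun i j : Fin 4 => if i = j then (1:ℝ) else 0) = z := by
    funext i
    simp [Fintype.linearCombination_apply]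
  rw [e] at h
  rw [← h]
  rfl

theorem compact_hull {C : Set (Fin 3 → ℝ)} (hC : IsCompact C) : IsCompact (convexHull ℝ C) := by
  have h1 : convexHull ℝ C = (fun q : (Fin 4 → ℝ) × (Fin 4 → Fin 3 → ℝ) => ∑ i, q.1 i • q.2 i) ''
      (stdSimplex ℝ (Fin 4) ×ˢ Set.pi Set.univ fun _ => C) := by
    apply Set.Subset.antisymm
    · rw [convexHull_eq_union]
      intro x hx
      simp only [Set.mem_iUnion] at hx
      obtain ⟨t, htC, hti, hxt⟩ := hx
      have hcard : Fintype.card t ≤ Fintype.card (Fin 4) := by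
        have h2 := hti.card_le_finrank_succ
        have h3 := Submodule.finrank_le (vectorSpan ℝ (Set.range ((↑) : t → Fin 3 → ℝ)))
        simp only [Module.finrank_fin_fun] at h3
        simp only [Fintype.card_fin]
        omega
      obtain ⟨e⟩ := Function.Embedding.nonempty_of_card_le hcard
      have hne : Nonempty t := by
        have : (t : Set (Fin 3 → ℝ)).Nonempty := (convexHull_nonempty_iff (𝕜 := ℝ)).1 ⟨x, hxt⟩
        exact this.to_subtype
      have hsurj : Function.Surjective (Function.invFun e) := Function.invFun_surjective e.injective
      have hr : (t : Set (Fin 3 → ℝ)) = Set.range fun i => ((Function.invFun e i : t) : Fin 3 → ℝ) := by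
        ext y
        constructor
        · intro hy
          obtain ⟨i, hi⟩ := hsurj ⟨y, hy⟩
          exact ⟨i, by simp [hi]⟩
        · rintro ⟨i, rfl⟩
          exact (Function.invFun e i).2
      rw [hr, hull_range] at hxt
      obtain ⟨c, hc, rfl⟩ := hxt
      exact ⟨(c, fun i => ((Function.invFun e i : t) : Fin 3 → ℝ)),
        ⟨hc, fun i _ => htC (Function.invFun e i).2⟩, rfl⟩
    · rintro _ ⟨⟨c, z⟩, ⟨hc, hz⟩, rfl⟩
      have : Set.range z ⊆ C := by rintro _ ⟨i, rfl⟩; exact hz i (Set.mem_univ _)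
      apply convexHull_mono this
      rw [hull_range]
      exact ⟨c, hc, rfl⟩
  rw [h1]
  refine ((isCompact_stdSimplex ℝ (Fin 4)).prod (isCompact_univ_pi fun _ => hC)).image ?_
  fun_prop

theorem not_mem_hull {p : ℕ → Fin 3 → ℝ} {v : Fin 3 → ℝ} {f : ℕ → (Fin 3 → ℝ) →ₗ[ℝ] ℝ}
    (hf : ∀ k, ∀ i ≤ k, f k (p i) ≤ 0) (hv : ∀ k, 0 < f k v) : v ∉ convexHull ℝ (Set.range p) := by
  intro h
  have hc : Convex ℝ {x | ∃ r, ∀ j, r ≤ j → f j x ≤ 0} := by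
    rintro x ⟨r, hr⟩ y ⟨s, hs⟩ a b ha hb _
    refine ⟨max r s, fun j hj => ?_⟩
    have h1 := hr j (le_trans (le_max_left _ _) hj)
    have h2 := hs j (le_trans (le_max_right _ _) hj)
    rw [map_add, map_smul, map_smul, smul_eq_mul, smul_eq_mul]
    nlinarith
  have hsub : Set.range p ⊆ {x | ∃ r, ∀ j, r ≤ j → f j x ≤ 0} := by
    rintro _ ⟨i, rfl⟩
    exact ⟨i, fun j hj => hf j i hj⟩
  obtain ⟨r, hr⟩ := convexHull_min hsub hc h
  exact absurd (hr r le_rfl) (not_le.2 (hv r))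

theorem extreme_v {H : Set (Fin 3 → ℝ)} (hH : H.Nonempty) {v : Fin 3 → ℝ}
    (hv : v ∉ convexHull ℝ H) : v ∈ Set.extremePoints ℝ (convexHull ℝ (insert v H)) := by
  rw [mem_extremePoints]
  refine ⟨subset_convexHull ℝ _ (Set.mem_insert _ _), ?_⟩
  rw [convexHull_insert hH]
  intro x1 h1 x2 h2 hx
  rw [convexJoin_singleton_left] at h1 h2
  simp only [Set.mem_iUnion] at h1 h2
  obtain ⟨y1, hy1, a1, t1, ha1, ht1, hat1, rfl⟩ := h1
  obtain ⟨y2, hy2, a2, t2, ha2, ht2, hat2, rfl⟩ := h2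
  obtain ⟨a, b, ha, hb, hab, he⟩ := hx
  have key : (a * t1 + b * t2) • v = (a * t1) • y1 + (b * t2) • y2 := by
    have e1 : a1 = 1 - t1 := by linarith
    have e2 : a2 = 1 - t2 := by linarith
    have e3 : a = 1 - b := by linarith
    subst e1 e2 e3
    ext i
    have := congrFun he i
    simp only [Pi.add_apply, Pi.smul_apply, smul_eq_mul] at this ⊢
    linear_combination -this
  have hz : ¬ 0 < a * t1 + b * t2 := by
    intro hp
    apply hv
    have hcv := convex_convexHull ℝ H
    have := hcv hy1 hy2 (a := (a*t1+b*t2)⁻¹ * (a * t1)) (b := (a*t1+b*t2)⁻¹ * (b * t2))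
      (by positivity) (by positivity) (by rw [← mul_add, inv_mul_cancel₀ hp.ne'])
    rw [mul_smul _ (a * t1), mul_smul _ (b * t2), ← smul_add, ← key, smul_smul, inv_mul_cancel₀ hp.ne', one_smul] at this
    exact this
  have p1 : 0 ≤ a * t1 := by positivity
  have p2 : 0 ≤ b * t2 := by positivity
  have z1 : t1 = 0 := by
    have : a * t1 = 0 := by linarith
    rcases mul_eq_zero.1 this with h | h
    · linarith
    · exact h
  have z2 : t2 = 0 := by
    have : b * t2 = 0 := by linarith
    rcases mul_eq_zero.1 this with h | h
    · linarith
    · exact h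
  subst z1 z2
  have : a1 = 1 := by linarith
  have : a2 = 1 := by linarith
  subst a1 a2
  simp

theorem acc_unique {p : ℕ → Fin 3 → ℝ} {v : Fin 3 → ℝ} (hp : Tendsto p atTop (𝓝 v))
    {X : Set (Fin 3 → ℝ)} (hX : X ⊆ insert v (Set.range p)) {v' : Fin 3 → ℝ}
    (h : AccPt v' (𝓟 X)) : v' = v := by
  by_contra hne
  obtain ⟨U, W, hU, hW, hvU, hvW, hd⟩ := t2_separation hne
  obtain ⟨N, hN⟩ := eventually_atTop.1 (hp.eventually (hW.mem_nhds hvW))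
  have hfin : (insert v (p '' Set.Iio N)).Finite := ((Set.finite_Iio N).image p).insert v
  have h2 : AccPt v' (𝓟 (U ∩ X)) := h.nhds_inter (hU.mem_nhds hvU)
  have hsub : U ∩ X ⊆ insert v (p '' Set.Iio N) := by
    rintro x ⟨hxU, hxX⟩
    rcases hX hxX with rfl | ⟨i, rfl⟩
    · exact Set.mem_insert _ _
    · right
      refine ⟨i, ?_, rfl⟩
      by_contra hi
      exact Set.disjoint_left.1 hd hxU (hN i (not_lt.1 hi))
  exact Set.Infinite.of_accPt (h2.mono (principal_mono.2 hsub)) hfin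

theorem supp_exists {p : ℕ → Fin 3 → ℝ} {v : Fin 3 → ℝ} {f : ℕ → (Fin 3 → ℝ) →ₗ[ℝ] ℝ}
    (hf : ∀ k, ∀ i ≤ k, f k (p i) ≤ 0) (hv : ∀ k, 0 < f k v) (hsv : sg v = 1)
    (hsp : ∀ i, sg (p i) = 1) :
    ∃ h : (Fin 3 → ℝ) →ₗ[ℝ] ℝ, h v = 0 ∧ (∃ x, sg x = 1 ∧ h x ≠ 0) ∧
      ∀ x ∈ convexHull ℝ (insert v (Set.range p)), h x ≤ 0 := by
  set h : ℕ → (Fin 3 → ℝ) →ₗ[ℝ] ℝ := fun r => f r - (f r v) • sg with hh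
  have hhv : ∀ r, h r v = 0 := by intro r; simp [hh, hsv]
  have hhp : ∀ r, ∀ i ≤ r, h r (p i) < 0 := by
    intro r i hi
    simp [hh, hsp]
    linarith [hf r i hi, hv r]
  set c : ℕ → Fin 3 → ℝ := fun r i => h r (ev i) with hc
  have hcne : ∀ r, c r ≠ 0 := by
    intro r h0
    have := hhp r 0 (Nat.zero_le _)
    rw [lin_coord] at this
    have h1 : ∀ i, h r (ev i) = 0 := fun i => congrFun h0 i
    simp [h1] at this
  obtain ⟨c0, hc0, φ, hφ, hlim⟩ := (isCompact_sphere (0 : Fin 3 → ℝ) 1).tendsto_subseq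
    (x := fun r => ‖c r‖⁻¹ • c r) (fun r => by
      simp [norm_smul, inv_mul_cancel₀ (norm_ne_zero_iff.2 (hcne r))])
  have hev : ∀ x, Tendsto (fun n => ‖c (φ n)‖⁻¹ * h (φ n) x) atTop (𝓝 (∑ i, c0 i * x i)) := by
    intro x
    have : ∀ n, ‖c (φ n)‖⁻¹ * h (φ n) x = ∑ i, (‖c (φ n)‖⁻¹ • c (φ n)) i * x i := by
      intro n
      rw [lin_coord (h (φ n)) x, Finset.mul_sum]
      simp [hc, mul_assoc]
    simp_rw [this]
    refine tendsto_finsetSum _ fun i _ => ?_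
    exact ((tendsto_pi_nhds.1 hlim) i).mul_const _
  set g : (Fin 3 → ℝ) →ₗ[ℝ] ℝ := ∑ i, c0 i • LinearMap.proj i with hg
  have hgx : ∀ x, g x = ∑ i, c0 i * x i := by intro x; simp [hg]
  have hgv : g v = 0 := by
    rw [hgx]
    have := hev v
    simp only [hhv, mul_zero] at this
    exact tendsto_nhds_unique this tendsto_const_nhds
  refine ⟨g, hgv, ?_, ?_⟩
  · by_contra hcon
    push Not at hcon
    have : c0 = 0 := by
      ext i
      have h1 := hcon (ev i) (by fin_cases i <;> simp [sg_apply, ev])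
      rw [hgx] at h1
      fin_cases i <;> simpa [Fin.sum_univ_three, ev] using h1
    simp [this] at hc0
  · intro x hx
    have hcv : Convex ℝ {x | g x ≤ 0} := convex_halfSpace_le g.isLinear 0
    refine convexHull_min ?_ hcv hx
    rintro y (rfl | ⟨i, rfl⟩)
    · exact hgv.le
    · show g (p i) ≤ 0
      rw [hgx]
      refine le_of_tendsto (hev (p i)) ?_
      filter_upwards [eventually_ge_atTop i] with n hn
      exact mul_nonpos_of_nonneg_of_nonpos (by positivity) (hhp _ i (hn.trans hφ.le_apply)).le

theorem parallel {d e y : Fin 3 → ℝ} {f : (Fin 3 → ℝ) →ₗ[ℝ] ℝ} (hd : d ≠ 0) (he : e ≠ 0)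
    (sd : sg d = 0) (se : sg e = 0) (sy : sg y = 0) (fd : f d = 0) (fe : f e = 0) (fy : f y ≠ 0) :
    ∃ c : ℝ, c ≠ 0 ∧ e = c • d := by
  have co : ∀ x, sg x = 0 → f x = (f (ev 0) - f (ev 2)) * x 0 + (f (ev 1) - f (ev 2)) * x 1 := by
    intro x hx
    rw [lin_coord f x, Fin.sum_univ_three]
    rw [sg_apply] at hx
    linear_combination f (ev 2) * hx
  rw [co d sd] at fd
  rw [co e se] at fe
  rw [co y sy] at fy
  rw [sg_apply] at sd se
  generalize f (ev 0) - f (ev 2) = α at *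
  generalize f (ev 1) - f (ev 2) = β at *
  have hcr : d 0 * e 1 = d 1 * e 0 := by
    by_cases ha : α = 0
    · have hb : β ≠ 0 := by
        rintro rfl
        subst ha
        simp at fy
      apply mul_left_cancel₀ hb
      linear_combination d 0 * fe - e 0 * fd
    · apply mul_left_cancel₀ ha
      linear_combination e 1 * fd - d 1 * fe
  have key : ∃ c : ℝ, e = c • d := by
    by_cases h0 : d 0 = 0
    · have h1 : d 1 ≠ 0 := by
        intro h1
        apply hd
        ext i
        fin_cases i
        · exact h0
        · exact h1
        · simp; linarith
      refine ⟨e 1 / d 1, ?_⟩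
      have e0 : e 0 = 0 := by
        rw [h0, zero_mul] at hcr
        rcases mul_eq_zero.1 hcr.symm with h | h
        · exact absurd h h1
        · exact h
      ext i
      fin_cases i
      · simp [h0, e0]
      · simp [h1]
      · have : d 2 = - d 1 := by linarith
        simp [this]
        field_simp
        linarith
    · refine ⟨e 0 / d 0, ?_⟩
      ext i
      fin_cases i
      · simp [h0]
      · simp; field_simp; linarith
      · have : d 2 = - d 0 - d 1 := by linarith
        have : e 2 = - e 0 - e 1 := by linarith
        simp [*]
        field_simp
        linarith
  obtain ⟨c, hc⟩ := key
  refine ⟨c, ?_, hc⟩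
  rintro rfl
  exact he (by simpa using hc)

theorem sg_unt {a v : Fin 3 → ℝ} (h1 : sg a = 1) (h2 : sg v = 1) : sg (unt (a - v)) = 0 := by
  rw [unt, map_smul, map_sub, h1, h2]; simp

theorem norm_unt {x : Fin 3 → ℝ} (h : x ≠ 0) : ‖unt x‖ = 1 := by
  rw [unt, norm_smul, norm_inv, norm_norm, inv_mul_cancel₀ (norm_ne_zero_iff.2 h)]

theorem geom {p : ℕ → Fin 3 → ℝ} {v : Fin 3 → ℝ} {f : ℕ → (Fin 3 → ℝ) →ₗ[ℝ] ℝ}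
    (hp : Tendsto p atTop (𝓝 v))
    (hf : ∀ k, ∀ i ≤ k, f k (p i) ≤ 0) (hv : ∀ k, 0 < f k v) (hsv : sg v = 1)
    (hsp : ∀ i, sg (p i) = 1) {S : Set (Fin 3 → ℝ)}
    (hS : S = convexHull ℝ (insert v (Set.range p)))
    (hsm : ∀ k : ℕ, ∃ a ∈ S, ∃ b ∈ S, a ≠ v ∧ b ≠ v ∧
      ‖unt (a - v) + unt (b - v)‖ ≤ ((k:ℝ)+1)⁻¹) :
    AccPt v (𝓟 (Set.extremePoints ℝ S)) ∧
    (∀ v', AccPt v' (𝓟 (Set.extremePoints ℝ S)) → v' = v) ∧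
    v ∈ Set.extremePoints ℝ S ∧ ∃! L : Set (Fin 3 → ℝ), IsSuppLine S v L := by
  have hne : (Set.range p).Nonempty := Set.range_nonempty p
  have hvH := not_mem_hull hf hv
  have hext : v ∈ Set.extremePoints ℝ S := hS ▸ extreme_v hne hvH
  have hsub : Set.extremePoints ℝ S ⊆ insert v (Set.range p) := by
    rw [hS]; exact extremePoints_convexHull_subset
  have hSc : IsCompact S := by rw [hS]; exact compact_hull hp.isCompact_insert_range
  have hScv : Convex ℝ S := by rw [hS]; exact convex_convexHull ℝ _
  have hSsg : ∀ x ∈ S, sg x = 1 := by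
    intro x hx
    rw [hS] at hx
    have hcv : Convex ℝ {x | sg x = 1} := convex_hyperplane sg.isLinear 1
    refine convexHull_min ?_ hcv hx
    rintro y (rfl | ⟨i, rfl⟩)
    · exact hsv
    · exact hsp i
  choose a haS b hbS hav hbv hab using hsm
  obtain ⟨d, hd, φ, hφ, hlim⟩ := (isCompact_sphere (0 : Fin 3 → ℝ) 1).tendsto_subseq
    (x := fun k => unt (a k - v)) (fun k => by
      simp [norm_unt (sub_ne_zero.2 (hav k))])
  have hlim0 : Tendsto (fun k => unt (a k - v) + unt (b k - v)) atTop (𝓝 0) := by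
    apply squeeze_zero_norm hab
    exact (tendsto_one_div_add_atTop_nhds_zero_nat (𝕜 := ℝ)).congr fun n => by rw [one_div]
  have hlim' : Tendsto (fun n => unt (b (φ n) - v)) atTop (𝓝 (-d)) := by
    have := (hlim0.comp hφ.tendsto_atTop).sub hlim
    simpa [Function.comp_def] using this
  have hd0 : d ≠ 0 := by rintro rfl; simp at hd
  have hcont : ∀ g : (Fin 3 → ℝ) →ₗ[ℝ] ℝ, Continuous g := fun g => g.continuous_of_finiteDimensional
  have L1 : ∀ g : (Fin 3 → ℝ) →ₗ[ℝ] ℝ, Tendsto (fun n => g (unt (a (φ n) - v))) atTop (𝓝 (g d)) :=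
    fun g => ((hcont g).tendsto d).comp hlim
  have L2 : ∀ g : (Fin 3 → ℝ) →ₗ[ℝ] ℝ, Tendsto (fun n => g (unt (b (φ n) - v))) atTop (𝓝 (-g d)) := by
    intro g
    have := ((hcont g).tendsto (-d)).comp hlim'
    rw [map_neg] at this
    exact this
  have hsd : sg d = 0 := by
    have := L1 sg
    simp only [sg_unt (hSsg _ (haS _)) hsv] at this
    exact tendsto_nhds_unique this tendsto_const_nhds
  have hgd : ∀ g : (Fin 3 → ℝ) →ₗ[ℝ] ℝ, (∀ x ∈ S, g x ≤ g v) → g d = 0 := by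
    intro g hg
    have hle : ∀ x ∈ S, g (unt (x - v)) ≤ 0 := by
      intro x hx
      rw [unt, map_smul, map_sub, smul_eq_mul]
      exact mul_nonpos_of_nonneg_of_nonpos (by positivity) (by linarith [hg x hx])
    have h1 := le_of_tendsto' (L1 g) fun n => hle _ (haS _)
    have h2 := le_of_tendsto' (L2 g) fun n => hle _ (hbS _)
    linarith
  refine ⟨?_, fun v' h => acc_unique hp hsub h, hext, ?_⟩
  · by_contra hacc
    have hfin : ∃ R, Set.extremePoints ℝ S ⊆ insert v (p '' Set.Iio R) := by
      rw [accPt_iff_nhds] at hacc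
      push Not at hacc
      obtain ⟨U, hU, hUe⟩ := hacc
      obtain ⟨R, hR⟩ := eventually_atTop.1 (hp.eventually hU)
      refine ⟨R, fun x hx => ?_⟩
      rcases hsub hx with rfl | ⟨i, rfl⟩
      · exact Set.mem_insert _ _
      · by_cases hi : i < R
        · exact Or.inr ⟨i, hi, rfl⟩
        · left
          exact hUe _ ⟨hR i (not_lt.1 hi), hx⟩
    obtain ⟨R, hR⟩ := hfin
    have hfin : (insert v (p '' Set.Iio R)).Finite := ((Set.finite_Iio R).image p).insert v
    have hSR : S ⊆ convexHull ℝ (insert v (p '' Set.Iio R)) := by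
      rw [← closure_convexHull_extremePoints hSc hScv]
      exact closure_minimal (convexHull_mono hR) (compact_hull hfin.isCompact).isClosed
    set h : (Fin 3 → ℝ) →ₗ[ℝ] ℝ := f R - (f R v) • sg with hh
    have hhv : h v = 0 := by simp [hh, hsv]
    have hhp : ∀ i ≤ R, h (p i) < 0 := by
      intro i hi
      simp [hh, hsp]
      linarith [hf R i hi, hv R]
    have hcex : ∃ c : ℝ, 0 < c ∧ ∀ i ∈ Finset.range R, h (p i) + c * ‖p i - v‖ ≤ 0 := by
      have : ∀ᶠ c in 𝓝[>] (0:ℝ), ∀ i ∈ Finset.range R, h (p i) + c * ‖p i - v‖ ≤ 0 := by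
        rw [Filter.eventually_all_finset]
        intro i hi
        have hc : Continuous fun c : ℝ => h (p i) + c * ‖p i - v‖ := by fun_prop
        have h0 : h (p i) + 0 * ‖p i - v‖ < 0 := by
          simpa using hhp i (Finset.mem_range.1 hi).le
        have := hc.continuousAt.eventually (Iio_mem_nhds h0)
        exact (this.filter_mono nhdsWithin_le_nhds).mono fun c hc => le_of_lt hc
      obtain ⟨c, hc1, hc2⟩ := (this.and self_mem_nhdsWithin).exists
      exact ⟨c, hc2, hc1⟩
    obtain ⟨c, hc0, hc⟩ := hcex
    have hcv : Convex ℝ {x : Fin 3 → ℝ | h x + c * ‖x - v‖ ≤ 0} := by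
      intro x hx y hy s t hs ht hst
      simp only [Set.mem_ofPred_eq] at hx hy ⊢
      have e : s • x + t • y - v = s • (x - v) + t • (y - v) := by
        have : v = (s + t) • v := by rw [hst, one_smul]
        conv_lhs => rw [this]
        module
      have n1 : ‖s • x + t • y - v‖ ≤ s * ‖x - v‖ + t * ‖y - v‖ := by
        rw [e]
        refine (norm_add_le _ _).trans ?_
        rw [norm_smul, norm_smul, Real.norm_of_nonneg hs, Real.norm_of_nonneg ht]
      rw [map_add, map_smul, map_smul, smul_eq_mul, smul_eq_mul]
      nlinarith
    have hall : ∀ x ∈ S, h x + c * ‖x - v‖ ≤ 0 := by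
      intro x hx
      refine convexHull_min ?_ hcv (hSR hx)
      rintro y (rfl | ⟨i, hi, rfl⟩)
      · simp [hhv]
      · exact hc i (Finset.mem_range.2 hi)
    have hu : ∀ x ∈ S, x ≠ v → h (unt (x - v)) ≤ -c := by
      intro x hx hxv
      have hpos : 0 < ‖x - v‖ := norm_pos_iff.2 (sub_ne_zero.2 hxv)
      rw [unt, map_smul, map_sub, hhv, sub_zero, smul_eq_mul, inv_mul_le_iff₀ hpos]
      linarith [hall x hx]
    have h1 := le_of_tendsto' (L1 h) fun n => hu _ (haS _) (hav _)
    have h2 := le_of_tendsto' (L2 h) fun n => hu _ (hbS _) (hbv _)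
    linarith
  · obtain ⟨h, hhv, ⟨x, hx, hhx⟩, hle⟩ := supp_exists hf hv hsv hsp
    rw [← hS] at hle
    refine ⟨{x | ∃ t : ℝ, x = v + t • d}, ⟨d, hd0, hsd, rfl, h,
      hgd h (by rw [hhv]; exact hle), ⟨x, hx, by rwa [hhv]⟩, by rw [hhv]; exact hle⟩, ?_⟩
    rintro L ⟨e, he0, hse, rfl, g, hge, ⟨y, hy, hgy⟩, hgS⟩
    obtain ⟨c, hc, rfl⟩ := parallel (y := y - v) hd0 he0 hsd hse
      (by rw [map_sub, hsv, sg_apply, hy, sub_self]) (hgd g hgS) hge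
      (by rw [map_sub]; exact sub_ne_zero.2 hgy)
    ext z
    constructor
    · rintro ⟨t, rfl⟩
      exact ⟨t * c, by rw [mul_smul]⟩
    · rintro ⟨t, rfl⟩
      exact ⟨t / c, by rw [smul_smul, div_mul_cancel₀ _ hc]⟩


theorem final {w : Seq3} (hw : w 0 = 2) (H : ∀ k m, ∃ u, fam k m u ∧ Inn w u) :
    ∃ v : Fin 3 → ℝ,
      AccPt v (𝓟 (Set.extremePoints ℝ (DF w))) ∧
      (∀ v', AccPt v' (𝓟 (Set.extremePoints ℝ (DF w))) → v' = v) ∧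
      v ∈ Set.extremePoints ℝ (DF w) ∧ TotallyIrrational v ∧
      ∃! L : Set (Fin 3 → ℝ), IsSuppLine (DF w) v L := by
  have H0 : ∀ k, ∃ u : List ℕ, u.length = k ∧ Inn w u := by
    intro k
    obtain ⟨u, hu, hi⟩ := H k 0
    refine ⟨u.take k, List.length_take_of_le hu.1, ?_⟩
    rw [← List.take_append_drop k u] at hi
    exact Inn_prefix hi
  choose pre hlen hinn using H0
  have huniq : ∀ u, Inn w u → u = pre u.length := fun u hu =>
    Inn_unique [] u (pre u.length) (hlen _).symm hu (hinn _)
  have htake : ∀ k i, i ≤ k → (pre k).take i = pre i := by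
    intro k i hi
    have h1 : Inn w ((pre k).take i) := by
      have := hinn k
      rw [← List.take_append_drop i (pre k)] at this
      exact Inn_prefix this
    have := huniq _ h1
    rwa [List.length_take_of_le (by rw [hlen]; exact hi)] at this
  have happ : ∀ i k, i ≤ k → ∃ t, pre k = pre i ++ t := fun i k hi =>
    ⟨(pre k).drop i, by rw [← htake k i hi, List.take_append_drop]⟩
  have hTm : ∀ i k, i ≤ k → T (pre k) ⊆ T (pre i) := by
    intro i k hi
    obtain ⟨t, ht⟩ := happ i k hi
    rw [ht]; exact T_append _ _
  have hDF : ∀ u, Inn w u → DF (wm u) ⊆ DF w ∧ DF w ⊆ DF (wp u) := fun u hu =>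
    ⟨DF_mono hu.1, DF_mono hu.2⟩
  set p : ℕ → Fin 3 → ℝ := fun i => cp (pre i) 0 with hp
  have hpD : ∀ i, p i ∈ DF w := fun i => by
    have := cp0_mem (pre i) []
    rw [List.append_nil] at this
    exact (hDF _ (hinn i)).1 this
  have hpsucc : ∀ i, cp (pre i) 1 = p (i+1) := by
    intro i
    obtain ⟨t, ht⟩ := happ i (i+1) (Nat.le_succ i)
    have hl := congrArg List.length ht
    rw [List.length_append, hlen, hlen] at hl
    obtain ⟨n, rfl⟩ := List.length_eq_one_iff.1 (show t.length = 1 by omega)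
    show _ = cp (pre (i+1)) 0
    rw [ht, cp, cp, AL_append]
    congr 2
    ext j
    fin_cases j <;> simp [AL_cons, AL_nil, A_apply, ev]
  have hpT : ∀ i k, i ≤ k → p k ∈ T (pre i) := fun i k hi => hTm i k hi (cp_T _ 0)
  obtain ⟨v, hvD, φ, hφ, hlim⟩ := (isCompact_DF hw).tendsto_subseq hpD
  have hvT : ∀ k, v ∈ T (pre k) := by
    intro k
    refine (isClosed_T _).mem_of_tendsto hlim ?_
    filter_upwards [eventually_ge_atTop k] with n hn
    exact hpT k _ (hn.trans hφ.le_apply)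
  have hdiam : ∀ ε : ℝ, 0 < ε → ∃ R, ∀ k, R ≤ k → ∀ x ∈ T (pre k), dist x v < ε := by
    intro ε hε
    obtain ⟨k, hk⟩ := exists_nat_one_div_lt hε
    obtain ⟨u, hu, hi⟩ := H k 0
    refine ⟨u.length, fun j hj x hx => ?_⟩
    have h2 := hTm _ _ hj hx
    have h3 := hvT u.length
    rw [← huniq u hi] at h2 h3
    refine (hu.2.1 x h2 v h3).trans_lt ?_
    rwa [← one_div]
  have htend : Tendsto p atTop (𝓝 v) := by
    rw [Metric.tendsto_atTop]
    intro ε hε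
    obtain ⟨R, hR⟩ := hdiam ε hε
    exact ⟨R, fun n hn => hR n hn _ (cp_T _ 0)⟩
  have hirr : TotallyIrrational v := by
    rintro ⟨m, hm, h0⟩
    obtain ⟨u, hu, hi⟩ := H 0 m
    have h3 := hvT u.length
    rw [← huniq u hi] at h3
    exact hu.2.2.2 hm v h3 h0
  have hfv : ∀ u, v ∈ T u → 0 < fu u v := by
    intro u hu
    have h1 : 0 ≤ fu u v := by rw [fu_apply]; exact hu.2 2
    refine lt_of_le_of_ne h1 fun h0 => ?_
    obtain ⟨m, hm, hx⟩ := fu_int u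
    exact hirr ⟨m, hm, by rw [← hx v, ← h0]⟩
  have hfp : ∀ k, ∀ i ≤ k, fu (pre k) (p i) ≤ 0 := by
    intro k i hi
    obtain ⟨t, ht⟩ := happ i k hi
    rw [hp]
    simp only
    rw [fu_cp, ht]
    exact mul_nonpos_of_nonneg_of_nonpos (inv_nonneg.2 (sg_AL_ev_pos _ _).le) (fu_cone0 _ _)
  have hsv : sg v = 1 := DF_sg hw hvD
  have hsp : ∀ i, sg (p i) = 1 := fun i => DF_sg hw (hpD i)
  have hS : DF w = convexHull ℝ (insert v (Set.range p)) := by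
    apply Set.Subset.antisymm
    · intro x hx
      by_contra hxn
      obtain ⟨g, hgx, hg⟩ := separate (compact_hull htend.isCompact_insert_range).isClosed
        (convex_convexHull ℝ _) (by
          intro y hy
          have hcv : Convex ℝ {x | sg x = 1} := convex_hyperplane sg.isLinear 1
          refine convexHull_min ?_ hcv hy
          rintro y (rfl | ⟨i, rfl⟩)
          · exact hsv
          · exact hsp i) hxn (DF_sg hw hx)
      have hgv : 0 < g v := hg v (subset_convexHull ℝ _ (Set.mem_insert _ _))
      have hgp : ∀ i, 0 < g (p i) := fun i =>
        hg _ (subset_convexHull ℝ _ (Or.inr ⟨i, rfl⟩))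
      have hgc : Continuous g := g.continuous_of_finiteDimensional
      obtain ⟨ε, hε, hb⟩ := Metric.eventually_nhds_iff.1
        (hgc.continuousAt.eventually (Ioi_mem_nhds hgv))
      obtain ⟨R, hR⟩ := hdiam ε hε
      have h2 : 0 < g (cp (pre R) 2) := hb (hR R le_rfl _ (cp_T _ 2))
      have := DF_nonneg (wp0 (pre R)) g (fun W hW => bound_wp (pre R) g
        (fun i hi => by
          rw [hlen] at hi
          rw [htake R i hi]
          exact g_cone (hgp i).le)
        (g_cone (by rw [hpsucc]; exact (hgp _).le)) (g_cone h2.le) hW)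
        ((hDF _ (hinn R)).2 hx)
      linarith
    · refine convexHull_min ?_ (convex_DF hw)
      rintro y (rfl | ⟨i, rfl⟩)
      · exact hvD
      · exact hpD i
  have hsm : ∀ k : ℕ, ∃ a ∈ DF w, ∃ b ∈ DF w, a ≠ v ∧ b ≠ v ∧
      ‖unt (a - v) + unt (b - v)‖ ≤ ((k:ℝ)+1)⁻¹ := by
    intro k
    obtain ⟨u, hu, hi⟩ := H k 0
    obtain ⟨u1, ⟨t, rfl⟩, hs⟩ := hu.2.2.1
    have hi1 := Inn_prefix hi
    have h3 := hvT (u1 ++ t).length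
    rw [← huniq _ hi] at h3
    have h4 := hfv u1 (T_append _ _ h3)
    have c0 := cp0_mem u1 []
    rw [List.append_nil] at c0
    have f0 := fu_cone0 u1 []
    rw [List.append_nil] at f0
    refine ⟨cp u1 0, (hDF _ hi1).1 c0, cp u1 1, (hDF _ hi1).1 (cp1_mem u1), ?_, ?_, hs v h3⟩
    · rintro rfl
      rw [fu_cp] at h4
      exact absurd (mul_nonpos_of_nonneg_of_nonpos (inv_nonneg.2 (sg_AL_ev_pos u1 0).le) f0)
        (not_le.2 h4)
    · rintro rfl
      rw [fu_cp, fu_cone1, mul_zero] at h4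
      exact lt_irrefl _ h4
  obtain ⟨g1, g2, g3, g4⟩ := geom htend hfp (fun k => hfv _ (hvT k)) hsv hsp hS hsm
  exact ⟨v, g1, g2, g3, hirr, g4⟩

/-- In `𝒟 = {DF(w) : w ∈ Max}` with the Hausdorff metric, there is a
dense `G_δ` set of digit frequency sets `Λ` whose extreme points have a unique
accumulation point `v`, which is an extreme point of `Λ`, is totally irrational, and at
which `Λ` is smooth (unique supporting line in the plane containing `Δ`). -/
theorem stmt12 :
    ∃ F : {w : Seq3 // w ∈ MaxSet} → TopologicalSpace.NonemptyCompacts (Fin 3 → ℝ),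
      (∀ w, (F w : Set (Fin 3 → ℝ)) = DF w.1) ∧
      ∃ G : Set ↥(Set.range F), Dense G ∧ IsGδ G ∧
        ∀ Λ ∈ G, ∀ S : Set (Fin 3 → ℝ),
          S = ((Λ : ↥(Set.range F)) : TopologicalSpace.NonemptyCompacts (Fin 3 → ℝ)) →
          ∃ v : Fin 3 → ℝ,
            AccPt v (Filter.principal (Set.extremePoints ℝ S)) ∧
            (∀ v', AccPt v' (Filter.principal (Set.extremePoints ℝ S)) → v' = v) ∧
            v ∈ Set.extremePoints ℝ S ∧
            TotallyIrrational v ∧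
            ∃! L : Set (Fin 3 → ℝ), IsSuppLine S v L := by
  refine ⟨FF, FF_coe, GG, dense_GG, isGδ_GG, ?_⟩
  rintro ⟨_, w, rfl⟩ hΛ S rfl
  refine final w.2.1 fun k m => ?_
  have h1 := Set.mem_iInter.1 hΛ (k, m)
  simp only [VV, Set.mem_iUnion] at h1
  obtain ⟨u, hu, hU⟩ := h1
  exact ⟨u, hu, Inn_of_UU hU rfl⟩
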